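/- arXiv:2501.07864 — 9 statements merged into one kernel-verified Lean document; each statement's English description precedes it below -/
import Mathlib

section
/- Let 𝔤 be a finite-dimensional real Lie algebra admitting a Lie algebra automorphism σ with σ³ = id and ker(σ − id) = 0 (σ has no nonzero fixed vectors). Then 𝔤 is two-step nilpotent: [𝔤, [𝔤, 𝔤]] = 0. -/
/-!
Over `ℂ` the claim follows from the eigenspace decomposition `𝔤 = V_ω ⊕ V_ω̄`: one has
`[V_ω, V_ω̄] ⊆ V_1 = 0`, `[V_ω, V_ω] ⊆ V_ω̄` and `[V_ω̄, V_ω̄] ⊆ V_ω`, and Jacobi finishes.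
The proof below is a version without complexification. Since `u + σ u + σ² u` is fixed, it
vanishes; applied to brackets this gives `⁅σ x, y⁆ = ⁅x, σ y⁆ = σ² ⁅x, y⁆` (the bracket is
conjugate-bilinear when `σ` is viewed as multiplication by `ω`). Writing `T = ⁅x, ⁅y, z⁆⁆`, this says
`⁅σ x, ⁅y, z⁆⁆ = σ² T`, while expanding the same bracket by the Jacobi identity gives
`σ⁴ T = σ T`. Hence `σ T` is fixed by `σ`, so `T = 0`.
-/

section

variable {L : Type*} [LieRing L] [LieAlgebra ℝ L] (σ : L ≃ₗ⁅ℝ⁆ L)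

lemma add_map_add_map_map_eq_zero (hσ3 : ∀ x, σ (σ (σ x)) = x)
    (hfix : ∀ x, σ x = x → x = 0) (u : L) : u + σ u + σ (σ u) = 0 := by
  apply hfix
  rw [map_add, map_add, hσ3]
  abel

/-- Real form of `[V_ω, V_ω̄] = 0`: it follows from `1 + σ + σ² = 0` applied to the brackets
`⁅x, σ y⁆` and `⁅σ x, y⁆`. -/
lemma map_lie_eq_lie_map (hσ3 : ∀ x, σ (σ (σ x)) = x)
    (hfix : ∀ x, σ x = x → x = 0) (x y : L) : ⁅σ x, y⁆ = ⁅x, σ y⁆ := by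
  have hsq : ∀ u, σ (σ u) = -u - σ u := fun u => by
    rw [← sub_eq_zero, ← add_map_add_map_map_eq_zero σ hσ3 hfix u]
    abel
  have hA : ∀ a b : L, ⁅a, b⁆ + ⁅σ a, σ b⁆ + ⁅-a - σ a, -b - σ b⁆ = 0 := fun a b => by
    have := add_map_add_map_map_eq_zero σ hσ3 hfix ⁅a, b⁆
    rwa [LieEquiv.map_lie, LieEquiv.map_lie, hsq, hsq] at this
  have h₁ := hA x (σ y)
  have h₂ := hA (σ x) y
  rw [hsq] at h₁ h₂
  simp only [sub_lie, lie_sub, neg_lie, lie_neg] at h₁ h₂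
  -- Subtracting `h₁` from `h₂`, the terms `⁅x, y⁆` and `⁅σ x, σ y⁆` cancel.
  have h₃ : (3 : ℝ) • (⁅σ x, y⁆ - ⁅x, σ y⁆) = 0 := by
    linear_combination (norm := module) h₂ - h₁
  exact sub_eq_zero.mp ((smul_eq_zero.mp h₃).resolve_left (by norm_num))

/-- Real form of `[V_ω, V_ω] ⊆ V_ω̄` and `[V_ω̄, V_ω̄] ⊆ V_ω`. -/
lemma lie_map_eq_map_map_lie (hσ3 : ∀ x, σ (σ (σ x)) = x)
    (hfix : ∀ x, σ x = x → x = 0) (x y : L) : ⁅x, σ y⁆ = σ (σ ⁅x, y⁆) := by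
  have h : σ ⁅x, σ y⁆ = ⁅x, y⁆ := by
    rw [LieEquiv.map_lie, map_lie_eq_lie_map σ hσ3 hfix, hσ3]
  rw [← h, hσ3]

end

/-- If a finite-dimensional real Lie algebra admits an automorphism `σ` with `σ³ = id`
and no nonzero fixed vectors, then it is two-step nilpotent: `[𝔤, [𝔤, 𝔤]] = 0`. -/
theorem two_step_nilpotent_of_fixed_point_free_order_three
    {L : Type*} [LieRing L] [LieAlgebra ℝ L] [FiniteDimensional ℝ L]
    (σ : L ≃ₗ⁅ℝ⁆ L)
    (hσ3 : ∀ x, σ (σ (σ x)) = x)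
    (hfix : ∀ x, σ x = x → x = 0) :
    ∀ x y z : L, ⁅x, ⁅y, z⁆⁆ = 0 := by
  intro x y z
  have hr := lie_map_eq_map_map_lie σ hσ3 hfix
  have hl : ∀ a b : L, ⁅σ a, b⁆ = σ (σ ⁅a, b⁆) := fun a b => by
    rw [map_lie_eq_lie_map σ hσ3 hfix, hr]
  have hjac : σ (σ ⁅x, ⁅y, z⁆⁆) = σ ⁅x, ⁅y, z⁆⁆ := by
    rw [← hl, leibniz_lie, hl x y, hl x z]
    simp only [hl, hr, hσ3]
    rw [← map_add, ← leibniz_lie]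
  exact (map_eq_zero_iff σ σ.injective).mp (hfix _ hjac)
end

section
/- Under the Riemannian hypothesis (ι injective and an ι(𝔥)-invariant inner product on 𝕍 exists), the Killing form B of 𝔤 restricted to 𝔥 is negative definite: B(F,F) < 0 for every nonzero F ∈ 𝔥. -/
/-!
Since `ad F` preserves the splitting `𝔤 = 𝔥 ⊕ 𝕍` for `F ∈ 𝔥`, the value `B(F, F)` is the sum of the
traces of `(ad F)²` on `𝔥` and on `𝕍`. A nonzero skew-adjoint operator `A` on a Euclidean space has
`tr A² = -tr (Aᵀ A) < 0` (`trace_comp_self_neg`). On `𝕍` this applies with the given inner product,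
because `ι F ≠ 0` by faithfulness. Hence minus the trace form of `ι` is an inner product on `𝔥`;
trace forms are invariant, so `ad F` is skew-adjoint on `𝔥` for it, and the trace of `(ad F)²` on
`𝔥` is nonpositive.
-/

open LinearMap in
/-- Diagonal entries of `A²` in an orthogonal basis `v` of a definite symmetric form: for
skew-adjoint `A` they are `-b(A vᵢ, A vᵢ) / b(vᵢ, vᵢ)`. -/
theorem exists_trace_comp_self_eq {W : Type*} [AddCommGroup W] [Module ℝ W] [FiniteDimensional ℝ W]
    (b : W →ₗ[ℝ] W →ₗ[ℝ] ℝ) (hsymm : ∀ v w, b v w = b w v)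
    (hpos : ∀ v, v ≠ 0 → 0 < b v v) (A : W →ₗ[ℝ] W)
    (hA : ∀ v w, b (A v) w + b v (A w) = 0) :
    ∃ v : Module.Basis (Fin (Module.finrank ℝ W)) ℝ W,
      trace ℝ W (A ∘ₗ A) = ∑ i, -(b (A (v i)) (A (v i)) / b (v i) (v i)) := by
  obtain ⟨v, hv⟩ := LinearMap.BilinForm.exists_orthogonal_basis (B := b) ⟨hsymm⟩
  refine ⟨v, ?_⟩
  rw [LinearMap.trace_eq_matrix_trace ℝ v, Matrix.trace]
  refine Finset.sum_congr rfl fun i _ ↦ ?_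
  rw [Matrix.diag_apply, LinearMap.toMatrix_apply, LinearMap.comp_apply]
  have hne : b (v i) (v i) ≠ 0 := (hpos _ (v.ne_zero i)).ne'
  have hcoord : ∀ x, b (v i) x = v.repr x i * b (v i) (v i) := by
    intro x
    conv_lhs => rw [← v.sum_repr x]
    rw [map_sum, Finset.sum_eq_single i]
    · simp
    · intro j _ hj
      have : b (v i) (v j) = 0 := hv hj.symm
      simp [this]
    · simp
  have h1 := hcoord (A (A (v i)))
  have h2 := hA (v i) (A (v i))
  rw [← neg_div, eq_div_iff hne]
  linarith

theorem trace_comp_self_nonpos {W : Type*} [AddCommGroup W] [Module ℝ W] [FiniteDimensional ℝ W]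
    (b : W →ₗ[ℝ] W →ₗ[ℝ] ℝ) (hsymm : ∀ v w, b v w = b w v)
    (hpos : ∀ v, v ≠ 0 → 0 < b v v) (A : W →ₗ[ℝ] W)
    (hA : ∀ v w, b (A v) w + b v (A w) = 0) :
    LinearMap.trace ℝ W (A ∘ₗ A) ≤ 0 := by
  obtain ⟨v, hv⟩ := exists_trace_comp_self_eq b hsymm hpos A hA
  rw [hv]
  have hnonneg : ∀ x, 0 ≤ b x x := fun x ↦ by
    by_cases hx : x = 0
    · simp [hx]
    · exact (hpos x hx).le
  exact Finset.sum_nonpos fun i _ ↦ neg_nonpos.mpr (div_nonneg (hnonneg _) (hnonneg _))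

theorem trace_comp_self_neg {W : Type*} [AddCommGroup W] [Module ℝ W] [FiniteDimensional ℝ W]
    (b : W →ₗ[ℝ] W →ₗ[ℝ] ℝ) (hsymm : ∀ v w, b v w = b w v)
    (hpos : ∀ v, v ≠ 0 → 0 < b v v) (A : W →ₗ[ℝ] W)
    (hA : ∀ v w, b (A v) w + b v (A w) = 0) (hA0 : A ≠ 0) :
    LinearMap.trace ℝ W (A ∘ₗ A) < 0 := by
  obtain ⟨v, hv⟩ := exists_trace_comp_self_eq b hsymm hpos A hA
  rw [hv]
  have hnonneg : ∀ x, 0 ≤ b x x := fun x ↦ by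
    by_cases hx : x = 0
    · simp [hx]
    · exact (hpos x hx).le
  obtain ⟨i, hi⟩ : ∃ i, A (v i) ≠ 0 := by
    by_contra! h
    exact hA0 (v.ext fun i ↦ by simpa using h i)
  exact Finset.sum_neg'
    (fun i _ ↦ neg_nonpos.mpr (div_nonneg (hnonneg _) (hnonneg _)))
    ⟨i, Finset.mem_univ i, neg_neg_of_pos (div_pos (hpos _ hi) (hpos _ (v.ne_zero i)))⟩

theorem trace_eq_add_of_isCompl {W : Type*} [AddCommGroup W] [Module ℝ W] [FiniteDimensional ℝ W]
    (p q : Submodule ℝ W) (hpq : IsCompl p q) (f : W →ₗ[ℝ] W)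
    (hp : ∀ x ∈ p, f x ∈ p) (hq : ∀ x ∈ q, f x ∈ q) :
    LinearMap.trace ℝ W f =
      LinearMap.trace ℝ p (f.restrict hp) + LinearMap.trace ℝ q (f.restrict hq) := by
  have hint : DirectSum.IsInternal (fun i : Bool ↦ cond i p q) :=
    (DirectSum.isInternal_submodule_iff_isCompl _ (i := true) (j := false) (by simp)
      (by ext i; cases i <;> simp)).mpr hpq
  have hf : ∀ i : Bool, Set.MapsTo f (cond i p q : Submodule ℝ W) (cond i p q : Submodule ℝ W) := by
    rintro (_ | _)
    · exact hq
    · exact hp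
  rw [LinearMap.trace_eq_sum_trace_restrict hint hf, Fintype.sum_bool]
  rfl

/-- The trace-form version of the statement, for a Lie subalgebra with a complementary submodule
carrying a faithful representation that preserves an inner product. -/
theorem killingForm_neg_of_isCompl {L : Type*} [LieRing L] [LieAlgebra ℝ L] [FiniteDimensional ℝ L]
    (H : LieSubalgebra ℝ L) (V : LieSubmodule ℝ H L)
    (hHV : IsCompl H.toSubmodule V.toSubmodule)
    (hinj : ∀ F : H, (∀ v : V, ⁅F, v⁆ = 0) → F = 0)
    (b : V →ₗ[ℝ] V →ₗ[ℝ] ℝ) (hsymm : ∀ v w, b v w = b w v)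
    (hpos : ∀ v, v ≠ 0 → 0 < b v v)
    (hskew : ∀ (F : H) (v w : V), b ⁅F, v⁆ w + b v ⁅F, w⁆ = 0)
    (F : H) (hF : F ≠ 0) : killingForm ℝ L F F < 0 := by
  have hV : ∀ X : H, X ≠ 0 → LieModule.traceForm ℝ H V X X < 0 := by
    intro X hX
    refine trace_comp_self_neg b hsymm hpos (LieModule.toEnd ℝ H V X) (hskew X) fun h ↦ hX ?_
    exact hinj X fun v ↦ LinearMap.congr_fun h v
  have hH : LieModule.traceForm ℝ H H F F ≤ 0 := by
    refine trace_comp_self_nonpos (-LieModule.traceForm ℝ H V)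
      (fun X Y ↦ by simp [LieModule.traceForm_comm ℝ H V X Y])
      (fun X hX ↦ by simpa using hV X hX) (LieModule.toEnd ℝ H H F) fun X Y ↦ ?_
    have := LieModule.traceForm_apply_lie_apply' ℝ H V F X Y
    simp only [LinearMap.neg_apply, LieModule.toEnd_apply_apply]
    linarith
  have hsplit : killingForm ℝ L F F =
      LieModule.traceForm ℝ H H F F + LieModule.traceForm ℝ H V F F :=
    trace_eq_add_of_isCompl H.toSubmodule V.toSubmodule hHV
      (LieAlgebra.ad ℝ L F ∘ₗ LieAlgebra.ad ℝ L F)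
      (fun x hx ↦ H.lie_mem F.2 (H.lie_mem F.2 hx))
      (fun x hx ↦ V.lie_mem (x := F) (V.lie_mem (x := F) hx))
  rw [hsplit]
  linarith [hV F hF]

/-- Under the Riemannian hypothesis (faithful isotropy representation admitting an
invariant inner product on `𝕍`), the Killing form of `𝔤` is negative definite on
`𝔥 = ker(σ - id)`. -/
theorem killingForm_negDef_on_isotropy
    {L : Type*} [LieRing L] [LieAlgebra ℝ L] [FiniteDimensional ℝ L]
    (σ : L ≃ₗ⁅ℝ⁆ L)
    (hσ3 : ∀ x, σ (σ (σ x)) = x)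
    (hσne : ∃ x, σ x ≠ x)
    (H V : Set L)
    (hH : H = {x | σ x = x})
    (hV : V = {x | σ (σ x) + σ x + x = 0})
    (hinj : ∀ F ∈ H, (∀ v ∈ V, ⁅F, v⁆ = (0 : L)) → F = 0)
    (g : L →ₗ[ℝ] L →ₗ[ℝ] ℝ)
    (hsymm : ∀ v ∈ V, ∀ w ∈ V, g v w = g w v)
    (hpos : ∀ v ∈ V, v ≠ 0 → 0 < g v v)
    (hskew : ∀ F ∈ H, ∀ v ∈ V, ∀ w ∈ V, g ⁅F, v⁆ w + g v ⁅F, w⁆ = 0) :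
    ∀ F ∈ H, F ≠ 0 → killingForm ℝ L F F < 0 := by
  subst hH hV
  let H' : LieSubalgebra ℝ L :=
    { carrier := {x | σ x = x}
      add_mem' := fun {x y} hx hy ↦ by
        simp only [Set.mem_setOf_eq] at *
        rw [map_add, hx, hy]
      zero_mem' := by simp
      smul_mem' := fun c x hx ↦ by
        simp only [Set.mem_setOf_eq] at *
        rw [map_smul, hx]
      lie_mem' := fun {x y} hx hy ↦ by
        change σ x = x at hx
        change σ y = y at hy
        change σ ⁅x, y⁆ = ⁅x, y⁆
        rw [LieEquiv.map_lie, hx, hy] }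
  let V' : LieSubmodule ℝ H' L :=
    { carrier := {x | σ (σ x) + σ x + x = 0}
      add_mem' := fun {x y} hx hy ↦ by
        simp only [Set.mem_setOf_eq] at *
        calc σ (σ (x + y)) + σ (x + y) + (x + y)
            = (σ (σ x) + σ x + x) + (σ (σ y) + σ y + y) := by simp only [map_add]; abel
          _ = 0 := by rw [hx, hy, add_zero]
      zero_mem' := by simp
      smul_mem' := fun c x hx ↦ by
        simp only [Set.mem_setOf_eq] at *
        rw [map_smul, map_smul, ← smul_add, ← smul_add, hx, smul_zero]
      lie_mem := fun {F x} hx ↦ by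
        change σ (σ x) + σ x + x = 0 at hx
        change σ (σ ⁅(F : L), x⁆) + σ ⁅(F : L), x⁆ + ⁅(F : L), x⁆ = 0
        have hF : σ (F : L) = F := F.2
        rw [LieEquiv.map_lie, LieEquiv.map_lie, hF, hF, ← lie_add, ← lie_add, hx, lie_zero] }
  have hcompl : IsCompl H'.toSubmodule V'.toSubmodule := by
    constructor
    · rw [Submodule.disjoint_def]
      intro x hx hx'
      change σ x = x at hx
      change σ (σ x) + σ x + x = 0 at hx'
      rw [hx, hx] at hx'
      have h3 : (3 : ℝ) • x = 0 := by rw [← hx']; module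
      simpa using h3
    · rw [codisjoint_iff, Submodule.eq_top_iff']
      intro x
      -- the projection onto the fixed points along `𝕍` is the average of `x`, `σ x`, `σ² x`
      refine Submodule.mem_sup.mpr ⟨(3⁻¹ : ℝ) • (σ (σ x) + σ x + x), ?_,
        x - (3⁻¹ : ℝ) • (σ (σ x) + σ x + x), ?_, by abel⟩
      · change σ _ = _
        rw [map_smul, map_add, map_add, hσ3]
        module
      · change σ (σ _) + σ _ + _ = 0
        simp only [map_sub, map_smul, map_add, hσ3]
        module
  intro F hF hF0
  refine killingForm_neg_of_isCompl H' V' hcompl ?_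
    (g.compl₁₂ V'.toSubmodule.subtype V'.toSubmodule.subtype) ?_ ?_ ?_
    ⟨F, hF⟩ (fun h ↦ hF0 (congrArg Subtype.val h))
  · intro X hX
    exact Subtype.ext (hinj X X.2 fun v hv ↦ congrArg Subtype.val (hX ⟨v, hv⟩))
  · intro v w
    exact hsymm v v.2 w w.2
  · intro v hv
    exact hpos v v.2 fun h ↦ hv (Subtype.ext h)
  · intro X v w
    exact hskew X X.2 v v.2 w w.2
end

section
/- Under the Riemannian hypothesis (ι injective and an ι(𝔥)-invariant inner product on 𝕍 exists), W = {v ∈ 𝕍 : ℛ(v,w) = 0 for all w ∈ 𝕍}; that is, the radical of the Killing form inside 𝕍 coincides with the curvature nullity of the canonical connection. -/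
/-!
Complexify and grade by the eigenvalues of `σ`: `𝔤 = 𝔤₀ ⊕ 𝔤₁ ⊕ 𝔤₂` with `𝔥 = 𝔤₀`. Both inclusions
are proved over `ℝ`, with `σ` standing in for the grading.

*Radical ⊆ nullity.* The Killing form `B` is negative definite on `𝔥`. Indeed `𝔥` acts
on `𝕍` by skew operators for a positive definite form, so `-tr (ι(E) ι(F))` is a positive definite
(as `ι` is injective) invariant form on `𝔥`; a skew operator `A` satisfies `tr A² ≤ 0`, with equality
only for `A = 0`, and `B(F,F)` is the sum of the traces of `(ad F)²` on `𝔥` and on `𝕍`.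
For `v` in the radical, `w ∈ 𝕍` and `x = [v,w]`, the element `F = x + σx + σ²x`
is three times the `𝔥`-component of `x`, and `B(F,F) = 3 B(F,x) = 3 B(v,[w,F]) = 0` since
`[w,F] ∈ 𝕍`; so `F = 0`, that is, `x ∈ 𝕍`.

*Nullity ⊆ radical.* This holds for every order-three automorphism. For `x ∈ 𝕍`, conjugating by `σ`
gives `tr (σ ad x) = tr (σ ad (σx))`, hence `3 tr (σ ad x) = tr (σ ad (x + σx + σ²x)) = 0`.
If `v` is in the nullity, then applying this to `x = [v,w]` gives
`tr (σ ad v ad w) = tr (σ ad w ad v) = tr (σ ad (σ⁻¹v) ad w)`, and summing over the `σ`-orbit of `v`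
gives `tr (σ ad v ad w) = 0`. The same holds for `σ²` in place of `σ`. Finally `ad v` has image in `𝕍`,
so `(1 + σ + σ²) ad v = 0`, and therefore `B(v,w) = tr (ad v ad w) = 0`.
-/

open LinearMap in
/-- The square of an operator that is skew for a positive definite form has nonpositive trace,
and the trace vanishes only if the operator does. -/
theorem trace_sq_of_skew {M : Type*} [AddCommGroup M] [Module ℝ M] [FiniteDimensional ℝ M]
    (G : M →ₗ[ℝ] M →ₗ[ℝ] ℝ) (hs : ∀ x y, G x y = G y x) (hp : ∀ x, x ≠ 0 → 0 < G x x)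
    (A : M →ₗ[ℝ] M) (hA : ∀ x y, G (A x) y + G x (A y) = 0) :
    trace ℝ M (A ∘ₗ A) ≤ 0 ∧ (trace ℝ M (A ∘ₗ A) = 0 → A = 0) := by
  obtain ⟨b, hb⟩ := LinearMap.BilinForm.exists_orthogonal_basis (B := G) ⟨fun x y => hs x y⟩
  have hbp : ∀ i, 0 < G (b i) (b i) := fun i => hp _ (b.ne_zero i)
  have hrepr : ∀ x i, b.repr x i = G (b i) x / G (b i) (b i) := by
    intro x i
    rw [eq_div_iff (hbp i).ne']
    conv_rhs => rw [← b.sum_repr x]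
    rw [map_sum, Finset.sum_eq_single i]
    · simp
    · intro j _ hj
      have h0 : G (b i) (b j) = 0 := hb hj.symm
      simp [h0]
    · simp
  have hnn : ∀ x, 0 ≤ G x x := fun x => by
    by_cases h : x = 0
    · simp [h]
    · exact (hp x h).le
  have htr : trace ℝ M (A ∘ₗ A) = -∑ i, G (A (b i)) (A (b i)) / G (b i) (b i) := by
    rw [trace_eq_matrix_trace ℝ b, Matrix.trace, ← Finset.sum_neg_distrib]
    refine Finset.sum_congr rfl fun i _ => ?_
    rw [Matrix.diag_apply, LinearMap.toMatrix_apply, hrepr, ← neg_div]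
    congr 1
    have := hA (b i) (A (b i))
    simp only [comp_apply]
    linarith
  have hterm : ∀ i, 0 ≤ G (A (b i)) (A (b i)) / G (b i) (b i) :=
    fun i => div_nonneg (hnn _) (hbp i).le
  rw [htr]
  refine ⟨neg_nonpos.2 (Finset.sum_nonneg fun i _ => hterm i), fun h => b.ext fun i => ?_⟩
  have h1 := (Finset.sum_eq_zero_iff_of_nonneg fun i _ => hterm i).1 (neg_eq_zero.1 h) i
    (Finset.mem_univ i)
  by_contra hne
  exact (div_pos (hp _ hne) (hbp i)).ne' h1

/-- A Lie algebra with a faithful module carrying an invariant positive definite form has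
negative definite trace form and negative semidefinite Killing form. -/
theorem forms_of_faithful_orthogonal {K M : Type*} [LieRing K] [LieAlgebra ℝ K]
    [FiniteDimensional ℝ K] [AddCommGroup M] [Module ℝ M] [FiniteDimensional ℝ M]
    [LieRingModule K M] [LieModule ℝ K M]
    (hinj : ∀ F : K, (∀ m : M, ⁅F, m⁆ = 0) → F = 0)
    (G : M →ₗ[ℝ] M →ₗ[ℝ] ℝ) (hs : ∀ x y, G x y = G y x) (hp : ∀ x, x ≠ 0 → 0 < G x x)
    (hG : ∀ (F : K) (x y : M), G ⁅F, x⁆ y + G x ⁅F, y⁆ = 0) (F : K) :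
    (F ≠ 0 → LieModule.traceForm ℝ K M F F < 0) ∧ killingForm ℝ K F F ≤ 0 := by
  have h1 : ∀ F : K, F ≠ 0 → LieModule.traceForm ℝ K M F F < 0 := by
    intro F hF
    obtain ⟨h, h'⟩ := trace_sq_of_skew G hs hp (LieModule.toEnd ℝ K M F) (hG F)
    refine lt_of_le_of_ne h fun h0 => hF (hinj F fun m => ?_)
    exact LinearMap.congr_fun (h' h0) m
  refine ⟨h1 F, ?_⟩
  refine (trace_sq_of_skew (-LieModule.traceForm ℝ K M) (fun x y => ?_) (fun x hx => ?_)
    (LieAlgebra.ad ℝ K F) fun x y => ?_).1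
  · simp [LieModule.traceForm_comm ℝ K M x y]
  · simpa using h1 x hx
  · simp [LieModule.traceForm_apply_lie_apply']

section OrderThree

variable {L : Type*} [LieRing L] [LieAlgebra ℝ L]

/-- The fixed-point subalgebra `𝔥 = ker (σ - 1)`. -/
def fixedSubalgebra (σ : L ≃ₗ⁅ℝ⁆ L) : LieSubalgebra ℝ L where
  carrier := {x | σ x = x}
  add_mem' {x y} hx hy := by simp_all
  zero_mem' := by simp
  smul_mem' c x hx := by simp_all
  lie_mem' {x y} hx hy := by
    change σ x = x at hx
    change σ y = y at hy
    change σ ⁅x, y⁆ = ⁅x, y⁆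
    rw [LieEquiv.map_lie, hx, hy]

/-- The complement `𝕍 = ker (σ² + σ + 1)`, as a module over `𝔥`. -/
def complementModule (σ : L ≃ₗ⁅ℝ⁆ L) : LieSubmodule ℝ (fixedSubalgebra σ) L where
  carrier := {x | σ (σ x) + σ x + x = 0}
  add_mem' {x y} hx hy := by
    change σ (σ x) + σ x + x = 0 at hx
    change σ (σ y) + σ y + y = 0 at hy
    change σ (σ (x + y)) + σ (x + y) + (x + y) = 0
    calc _ = (σ (σ x) + σ x + x) + (σ (σ y) + σ y + y) := by simp only [map_add]; abel
      _ = 0 := by rw [hx, hy, add_zero]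
  zero_mem' := by simp
  smul_mem' c x hx := by
    change σ (σ x) + σ x + x = 0 at hx
    change σ (σ (c • x)) + σ (c • x) + c • x = 0
    simp only [map_smul]
    rw [← smul_add, ← smul_add, hx, smul_zero]
  lie_mem {F x} hx := by
    have hF : σ (F : L) = F := F.2
    change σ (σ x) + σ x + x = 0 at hx
    change σ (σ ⁅(F : L), x⁆) + σ ⁅(F : L), x⁆ + ⁅(F : L), x⁆ = 0
    rw [LieEquiv.map_lie, LieEquiv.map_lie, hF, hF, ← lie_add, ← lie_add, hx, lie_zero]

theorem isCompl_fixed_complement (σ : L ≃ₗ⁅ℝ⁆ L) (hσ3 : ∀ x, σ (σ (σ x)) = x) :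
    IsCompl (fixedSubalgebra σ).toSubmodule (complementModule σ).toSubmodule := by
  constructor
  · rw [Submodule.disjoint_def]
    intro x hx hx'
    change σ x = x at hx
    change σ (σ x) + σ x + x = 0 at hx'
    rw [hx, hx] at hx'
    have h3 : (3 : ℝ) • x = 0 := by rw [← hx']; module
    simpa using h3
  · rw [codisjoint_iff, Submodule.eq_top_iff']
    intro x
    refine Submodule.mem_sup.2 ⟨(1 / 3 : ℝ) • (σ (σ x) + σ x + x), ?_,
      x - (1 / 3 : ℝ) • (σ (σ x) + σ x + x), ?_, by abel⟩
    · change σ _ = _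
      simp only [map_smul, map_add, hσ3]
      module
    · change σ (σ _) + σ _ + _ = 0
      simp only [map_smul, map_add, map_sub, hσ3]
      module

variable [FiniteDimensional ℝ L]

theorem killingForm_eq_add (σ : L ≃ₗ⁅ℝ⁆ L) (hσ3 : ∀ x, σ (σ (σ x)) = x)
    (F : fixedSubalgebra σ) :
    killingForm ℝ L (F : L) (F : L) = killingForm ℝ (fixedSubalgebra σ) F F
      + LieModule.traceForm ℝ (fixedSubalgebra σ) (complementModule σ) F F := by
  let N : Bool → Submodule ℝ L := fun i =>
    bif i then (fixedSubalgebra σ).toSubmodule else (complementModule σ).toSubmodule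
  have hN : DirectSum.IsInternal N :=
    (DirectSum.isInternal_submodule_iff_isCompl N (i := true) (j := false) (by simp)
      (by ext i; cases i <;> simp)).2 (isCompl_fixed_complement σ hσ3)
  have hmaps : ∀ i, Set.MapsTo (LieAlgebra.ad ℝ L (F : L) ∘ₗ LieAlgebra.ad ℝ L (F : L))
      (N i) (N i) := by
    intro i x hx
    cases i
    · exact (complementModule σ).lie_mem (x := F) ((complementModule σ).lie_mem (x := F) hx)
    · exact (fixedSubalgebra σ).lie_mem F.2 ((fixedSubalgebra σ).lie_mem F.2 hx)
  rw [killingForm_apply_apply, LinearMap.trace_eq_sum_trace_restrict hN hmaps, Fintype.sum_bool]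
  rfl

theorem trace_comp_ad_eq_zero (φ : L ≃ₗ⁅ℝ⁆ L) (x : L) (hx : φ (φ x) + φ x + x = 0) :
    LinearMap.trace ℝ L ((φ : L →ₗ[ℝ] L) ∘ₗ LieAlgebra.ad ℝ L x) = 0 := by
  have key : ∀ y, LinearMap.trace ℝ L ((φ : L →ₗ[ℝ] L) ∘ₗ LieAlgebra.ad ℝ L (φ y))
      = LinearMap.trace ℝ L ((φ : L →ₗ[ℝ] L) ∘ₗ LieAlgebra.ad ℝ L y) := by
    intro y
    have : LieAlgebra.ad ℝ L (φ y) ∘ₗ (φ : L →ₗ[ℝ] L)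
        = (φ : L →ₗ[ℝ] L) ∘ₗ LieAlgebra.ad ℝ L y := by
      ext z; simp [LieEquiv.map_lie]
    rw [LinearMap.trace_comp_comm', this]
  have h := congrArg (fun y => LinearMap.trace ℝ L ((φ : L →ₗ[ℝ] L) ∘ₗ LieAlgebra.ad ℝ L y)) hx
  simp only [map_add, LinearMap.comp_add, key, map_zero, LinearMap.comp_zero] at h
  linarith

/-- The twisted trace `tr (φ ad v ad w)` vanishes when the `φ`-orbit of `v` brackets `w` into
`ker (φ² + φ + 1)`. -/
theorem trace_comp_ad_ad_eq_zero (φ : L ≃ₗ⁅ℝ⁆ L) (v w : L)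
    (hv : φ (φ v) + φ v + v = 0)
    (h1 : φ (φ ⁅φ v, w⁆) + φ ⁅φ v, w⁆ + ⁅φ v, w⁆ = 0)
    (h2 : φ (φ ⁅φ (φ v), w⁆) + φ ⁅φ (φ v), w⁆ + ⁅φ (φ v), w⁆ = 0) :
    LinearMap.trace ℝ L
      ((φ : L →ₗ[ℝ] L) ∘ₗ LieAlgebra.ad ℝ L v ∘ₗ LieAlgebra.ad ℝ L w) = 0 := by
  let D := LieAlgebra.ad ℝ L
  have key : ∀ y, φ (φ ⁅φ y, w⁆) + φ ⁅φ y, w⁆ + ⁅φ y, w⁆ = 0 →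
      LinearMap.trace ℝ L ((φ : L →ₗ[ℝ] L) ∘ₗ D (φ y) ∘ₗ D w)
        = LinearMap.trace ℝ L ((φ : L →ₗ[ℝ] L) ∘ₗ D y ∘ₗ D w) := by
    intro y hy
    have h0 := trace_comp_ad_eq_zero φ _ hy
    have hc : (φ : L →ₗ[ℝ] L) ∘ₗ LieAlgebra.ad ℝ L ⁅φ y, w⁆
        = (φ : L →ₗ[ℝ] L) ∘ₗ D (φ y) ∘ₗ D w - ((φ : L →ₗ[ℝ] L) ∘ₗ D w) ∘ₗ D (φ y) := by
      ext z; simp [D]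
    have hd : D (φ y) ∘ₗ ((φ : L →ₗ[ℝ] L) ∘ₗ D w) = (φ : L →ₗ[ℝ] L) ∘ₗ D y ∘ₗ D w := by
      ext z; simp [D, LieEquiv.map_lie]
    rw [hc, map_sub, LinearMap.trace_comp_comm' (D (φ y)), hd] at h0
    linarith
  have h := congrArg (fun y => LinearMap.trace ℝ L ((φ : L →ₗ[ℝ] L) ∘ₗ D y ∘ₗ D w)) hv
  simp only [map_add, LinearMap.comp_add, LinearMap.add_comp, key _ h1, key _ h2, map_zero,
    LinearMap.comp_zero, LinearMap.zero_comp] at h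
  change LinearMap.trace ℝ L ((φ : L →ₗ[ℝ] L) ∘ₗ D v ∘ₗ D w) = 0
  linarith

/-- The nullity `{v ∈ 𝕍 | [v, 𝕍] ⊆ 𝕍}` lies in the radical of the Killing form; no invariant
inner product is involved. -/
theorem killingForm_eq_zero_of_nullity (σ : L ≃ₗ⁅ℝ⁆ L) (hσ3 : ∀ x, σ (σ (σ x)) = x) (v : L)
    (hv : v ∈ complementModule σ)
    (hN : ∀ w ∈ complementModule σ, ⁅v, w⁆ ∈ complementModule σ)
    (w : L) (hw : w ∈ complementModule σ) : killingForm ℝ L v w = 0 := by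
  have hmem : ∀ x, x ∈ complementModule σ ↔ σ (σ x) + σ x + x = 0 := fun x => Iff.rfl
  have hstab : ∀ x ∈ complementModule σ, σ x ∈ complementModule σ := by
    intro x hx
    rw [hmem] at hx ⊢
    simpa using congrArg σ hx
  have hN1 : ∀ u, (∀ w ∈ complementModule σ, ⁅u, w⁆ ∈ complementModule σ) →
      ∀ w ∈ complementModule σ, ⁅σ u, w⁆ ∈ complementModule σ := by
    intro u hu w hw
    have : ⁅σ u, w⁆ = σ ⁅u, σ (σ w)⁆ := by rw [LieEquiv.map_lie, hσ3]
    rw [this]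
    exact hstab _ (hu _ (hstab _ (hstab _ hw)))
  have e1 := (hmem _).1 (hN1 v hN w hw)
  have e2 := (hmem _).1 (hN1 _ (hN1 v hN) w hw)
  have hv' := (hmem v).1 hv
  have t1 := trace_comp_ad_ad_eq_zero σ v w hv' e1 e2
  have t2 := trace_comp_ad_ad_eq_zero (σ.trans σ) v w
    (by simp only [LieEquiv.trans_apply, hσ3]; rw [← hv']; abel)
    (by simp only [LieEquiv.trans_apply, hσ3]; rw [← e2]; abel)
    (by simp only [LieEquiv.trans_apply, hσ3]; rw [← e1]; abel)
  have him : ∀ z, ⁅v, z⁆ ∈ complementModule σ := by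
    intro z
    obtain ⟨a, ha, b, hb, rfl⟩ := Submodule.mem_sup.1
      ((isCompl_fixed_complement σ hσ3).sup_eq_top ▸ Submodule.mem_top (x := z))
    rw [lie_add, ← lie_skew]
    exact add_mem (neg_mem ((complementModule σ).lie_mem (x := ⟨a, ha⟩) hv)) (hN b hb)
  have hsum : ((σ.trans σ : L ≃ₗ⁅ℝ⁆ L) : L →ₗ[ℝ] L) ∘ₗ
        LieAlgebra.ad ℝ L v ∘ₗ LieAlgebra.ad ℝ L w
      + (σ : L →ₗ[ℝ] L) ∘ₗ LieAlgebra.ad ℝ L v ∘ₗ LieAlgebra.ad ℝ L w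
      + LieAlgebra.ad ℝ L v ∘ₗ LieAlgebra.ad ℝ L w = 0 := by
    ext z
    exact him ⁅w, z⁆
  have h := congrArg (LinearMap.trace ℝ L) hsum
  rw [map_add, map_add, t1, t2, map_zero, zero_add, zero_add] at h
  exact h

end OrderThree


/-- Under the Riemannian hypothesis, the radical `W` of the Killing form inside `𝕍`
coincides with the curvature nullity of the canonical connection: `v ∈ W` iff the
`𝔥`-component `ℛ(v,w)` of `[v,w]` vanishes for all `w ∈ 𝕍`, i.e. iff `[v,w] ∈ 𝕍`
for all `w ∈ 𝕍`. -/
theorem W_eq_curvature_nullity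
    {L : Type*} [LieRing L] [LieAlgebra ℝ L] [FiniteDimensional ℝ L]
    (σ : L ≃ₗ⁅ℝ⁆ L)
    (hσ3 : ∀ x, σ (σ (σ x)) = x)
    (hσne : ∃ x, σ x ≠ x)
    (H V : Set L)
    (hH : H = {x | σ x = x})
    (hV : V = {x | σ (σ x) + σ x + x = 0})
    (hinj : ∀ F ∈ H, (∀ v ∈ V, ⁅F, v⁆ = (0 : L)) → F = 0)
    (g : L →ₗ[ℝ] L →ₗ[ℝ] ℝ)
    (hsymm : ∀ v ∈ V, ∀ w ∈ V, g v w = g w v)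
    (hpos : ∀ v ∈ V, v ≠ 0 → 0 < g v v)
    (hskew : ∀ F ∈ H, ∀ v ∈ V, ∀ w ∈ V, g ⁅F, v⁆ w + g v ⁅F, w⁆ = 0) :
    {v : L | v ∈ V ∧ ∀ w ∈ V, killingForm ℝ L v w = 0}
      = {v : L | v ∈ V ∧ ∀ w ∈ V, ⁅v, w⁆ ∈ V} := by
  subst hH hV
  have hBneg : ∀ F : fixedSubalgebra σ, killingForm ℝ L (F : L) (F : L) = 0 → (F : L) = 0 := by
    intro F hF
    obtain ⟨h1, h2⟩ := forms_of_faithful_orthogonal (K := fixedSubalgebra σ)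
      (M := complementModule σ)
      (fun F hF => Subtype.ext (hinj F F.2 fun v hv => congrArg Subtype.val (hF ⟨v, hv⟩)))
      (g.compl₁₂ (complementModule σ).toSubmodule.subtype
        (complementModule σ).toSubmodule.subtype)
      (fun x y => hsymm x x.2 y y.2)
      (fun x hx => hpos x x.2 fun h => hx (Subtype.ext h))
      (fun F x y => hskew F F.2 x x.2 y y.2) F
    rw [killingForm_eq_add σ hσ3] at hF
    by_contra hne
    have := h1 fun h => hne (congrArg Subtype.val h)
    linarith
  ext v
  refine ⟨fun ⟨hv, hW⟩ => ⟨hv, fun w hw => ?_⟩, fun ⟨hv, hN⟩ => ⟨hv, fun w hw =>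
    killingForm_eq_zero_of_nullity σ hσ3 v hv hN w hw⟩⟩
  set x := ⁅v, w⁆ with hx
  let F : fixedSubalgebra σ := ⟨σ (σ x) + σ x + x, by
    change σ _ = _
    simp only [map_add, hσ3]
    abel⟩
  have hσF : σ (F : L) = F := F.2
  have hFx : killingForm ℝ L x (F : L) = 0 := by
    have h := LieModule.traceForm_apply_lie_apply ℝ L L v w (F : L)
    rw [hx]
    refine h.trans (hW _ ?_)
    rw [← lie_skew]
    have hFw : ⁅(F : L), w⁆ ∈ complementModule σ := (complementModule σ).lie_mem (x := F) hw
    exact neg_mem hFw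
  have hinv : ∀ y, killingForm ℝ L (σ y) (F : L) = killingForm ℝ L y (F : L) := by
    intro y
    conv_lhs => rw [← hσF]
    exact LieAlgebra.killingForm_of_equiv_apply σ y F
  refine hBneg F ?_
  change killingForm ℝ L (σ (σ x) + σ x + x) (F : L) = 0
  simp only [map_add, LinearMap.add_apply, hinv, hFx, add_zero]
end

section
/- Under the Riemannian hypothesis (ι injective and an ι(𝔥)-invariant inner product on 𝕍 exists), the radical (maximal solvable ideal) of the transvection algebra 𝔤̲ := 𝕍 + [𝕍,𝕍] equals W; in particular the radical of 𝔤̲ is contained in 𝕍. -/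
/-!
Every `x` splits as `fixProj σ x + movProj σ x` along `L = 𝔥 ⊕ 𝕍`, and `𝔥 ⊥ 𝕍` for the Killing
form `B` because `B` is `σ`-invariant. The argument rests on two facts.

* An inner product `Q` on `L` exists for which `ad F` is skew for every `F ∈ 𝔥`
  (`exists_invariant_form`): on `𝕍` it is the given one, and on `𝔥` it is minus the trace form of
  the isotropy representation. Since `tr A² < 0` for a nonzero skew operator `A`, the form `B` is
  negative definite on `𝔥` (`fixed_eq_zero_of_killingForm`).
* A `σ`-stable subalgebra `N ⊆ 𝕍`, on which `σ` has order three without nonzero fixed points,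
  satisfies `[[N, N], N] = 0` (`lie_lie_eq_zero_of_orderThree`). Hence a `σ`-stable ideal of the
  transvection algebra contained in `𝕍` is solvable, and it is `B`-orthogonal to the whole
  transvection algebra (`ideal_killingForm_eq_zero`).

`W` lies in the radical: since `𝔥 ⊥ 𝕍`, `W` is contained in the kernel of `B`, which is an ideal of
`L`, and by negative definiteness this kernel is contained in `𝕍`; so it is solvable.

Conversely, let `I` be a `σ`-stable ideal of the transvection algebra with `[I, I] ⊆ 𝕍`, and let
`F ∈ I ∩ 𝔥`. As `ad F` is skew, `[F, 𝕍] = [F, [F, 𝕍]] ⊆ [I, I]`, which is `B`-orthogonal to `𝕍`.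
Thus `B(F, [v, w]) = B([F, v], w) = 0` for `v, w ∈ 𝕍`, so `F` is orthogonal to `𝕍 + [𝕍, 𝕍]`, in
particular to itself, and `F = 0`. Hence `I ⊆ 𝕍` (`ideal_moved_of_derived_moved`). Climbing up the
derived series of the radical in this way shows that the radical is contained in `𝕍`, so it is
orthogonal to `𝕍` by the second fact.
-/

/-! ### Skew-adjoint operators -/

section LinearAlgebra

variable {E : Type*} [AddCommGroup E] [Module ℝ E] [FiniteDimensional ℝ E]

theorem exists_posDef_form (E : Type*) [AddCommGroup E] [Module ℝ E] [FiniteDimensional ℝ E] :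
    ∃ e : E →ₗ[ℝ] E →ₗ[ℝ] ℝ, (∀ x y, e x y = e y x) ∧ ∀ x, x ≠ 0 → 0 < e x x := by
  let b := Module.finBasis ℝ E
  refine ⟨∑ i, (b.coord i).smulRight (b.coord i), fun x y => ?_, fun x hx => ?_⟩
  · simp [LinearMap.sum_apply, mul_comm]
  · obtain ⟨i, hi⟩ : ∃ i, b.coord i x ≠ 0 := by
      by_contra! h
      exact hx (b.forall_coord_eq_zero_iff.mp h)
    simp only [LinearMap.sum_apply, LinearMap.smulRight_apply, LinearMap.smul_apply, smul_eq_mul]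
    exact Finset.sum_pos' (fun i _ => mul_self_nonneg _)
      ⟨i, Finset.mem_univ i, mul_self_pos.mpr hi⟩

/-- In a `Q`-orthonormal basis `tr A² = -∑ Q (A eᵢ) (A eᵢ)`. -/
theorem trace_sq_of_skew_s4 (Q : E →ₗ[ℝ] E →ₗ[ℝ] ℝ) (hs : ∀ x y, Q x y = Q y x)
    (hp : ∀ x, x ≠ 0 → 0 < Q x x) (A : E →ₗ[ℝ] E) (hA : ∀ x y, Q (A x) y + Q x (A y) = 0) :
    LinearMap.trace ℝ E (A * A) ≤ 0 ∧ (LinearMap.trace ℝ E (A * A) = 0 → A = 0) := by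
  have hnn : ∀ x, 0 ≤ Q x x := fun x => by
    rcases eq_or_ne x 0 with rfl | h
    · simp
    · exact (hp x h).le
  let core : InnerProductSpace.Core ℝ E :=
    { inner := fun x y => Q x y
      conj_inner_symm := fun x y => by simpa using hs y x
      re_inner_nonneg := fun x => by simpa using hnn x
      add_left := fun x y z => by simp
      smul_left := fun x y r => by simp
      definite := fun x hx => by
        by_contra h
        exact (hp x h).ne' hx }
  let _ : NormedAddCommGroup E := core.toNormedAddCommGroup
  let _ : InnerProductSpace ℝ E := InnerProductSpace.ofCore core.toCore
  have hin : ∀ x y : E, inner ℝ x y = Q x y := fun x y => rfl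
  let b := stdOrthonormalBasis ℝ E
  have ht : LinearMap.trace ℝ E (A * A) = ∑ i, -Q (A (b i)) (A (b i)) := by
    rw [LinearMap.trace_eq_sum_inner _ b]
    refine Finset.sum_congr rfl fun i _ => ?_
    rw [hin]
    have := hA (b i) (A (b i))
    simp only [Module.End.mul_apply]
    linarith
  rw [ht]
  refine ⟨Finset.sum_nonpos fun i _ => neg_nonpos.mpr (hnn _), fun h => ?_⟩
  rw [Finset.sum_eq_zero_iff_of_nonpos fun i _ => neg_nonpos.mpr (hnn _)] at h
  refine b.toBasis.ext fun i => ?_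
  by_contra hne
  have := h i (Finset.mem_univ i)
  have h2 := hp (A (b i)) (by simpa using hne)
  linarith

/-- For skew `A`, the kernels of `A²` and `A` agree, hence so do their ranges. -/
theorem exists_sq_of_skew (Q : E →ₗ[ℝ] E →ₗ[ℝ] ℝ)
    (hp : ∀ x, x ≠ 0 → 0 < Q x x) (A : E →ₗ[ℝ] E) (hA : ∀ x y, Q (A x) y + Q x (A y) = 0) (x : E) :
    ∃ u, A x = A (A u) := by
  have hker : LinearMap.ker (A * A) = LinearMap.ker A := by
    ext y
    simp only [LinearMap.mem_ker, Module.End.mul_apply]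
    refine ⟨fun h => ?_, fun h => by simp [h]⟩
    by_contra hne
    have h1 := hA y (A y)
    rw [h, map_zero, add_zero] at h1
    exact (hp _ hne).ne' h1
  have hr : LinearMap.range (A * A) = LinearMap.range A := by
    refine Submodule.eq_of_le_of_finrank_eq (LinearMap.range_comp_le_range A A) ?_
    have h1 := LinearMap.finrank_range_add_finrank_ker A
    have h2 := LinearMap.finrank_range_add_finrank_ker (A * A)
    rw [hker] at h2
    omega
  have : A x ∈ LinearMap.range (A * A) := hr ▸ LinearMap.mem_range_self A x
  obtain ⟨u, hu⟩ := this
  exact ⟨u, hu.symm⟩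

end LinearAlgebra

/-! ### Automorphisms of order three without fixed points -/

section ThreeSymmetric

variable {L : Type*} [LieRing L] [LieAlgebra ℝ L]

/-- The bracket of `N` satisfies `[σ u, v] = [u, σ v] = σ² [u, v]`: comparing the Jacobi identities
for `(x, y, z)` and `(x, y, σ z)` yields `[[x, y], z] = -2 σ [[x, y], z]`, which forces
`[[x, y], z] = 0` because `σ² + σ + 1 = 0` on `N`. -/
theorem lie_lie_eq_zero_of_orderThree (σ : L ≃ₗ⁅ℝ⁆ L) (N : Submodule ℝ L)
    (hN : ∀ x ∈ N, σ (σ x) + σ x + x = 0) (hσ : ∀ x ∈ N, σ x ∈ N)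
    (hbr : ∀ x ∈ N, ∀ y ∈ N, ⁅x, y⁆ ∈ N) {x y z : L} (hx : x ∈ N) (hy : y ∈ N) (hz : z ∈ N) :
    ⁅⁅x, y⁆, z⁆ = 0 := by
  have e2 : ∀ x ∈ N, σ (σ x) = - σ x - x := fun x hx => by
    rw [← sub_eq_zero, ← hN x hx]; abel
  have key : ∀ u ∈ N, ∀ v ∈ N, ⁅u, σ v⁆ = ⁅σ u, v⁆ ∧ σ ⁅u, v⁆ = -⁅u, v⁆ - ⁅u, σ v⁆ := by
    have h0 : ∀ u ∈ N, ∀ v ∈ N,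
        (2 : ℝ) • ⁅u, v⁆ + (2 : ℝ) • ⁅σ u, σ v⁆ + ⁅u, σ v⁆ + ⁅σ u, v⁆ = 0 := fun u hu v hv => by
      have h := hN _ (hbr u hu v hv)
      simp only [LieEquiv.map_lie, e2 u hu, e2 v hv, sub_lie, lie_sub, neg_lie, lie_neg] at h
      rw [← h]; module
    intro u hu v hv
    have h1 := h0 u hu v hv
    have h2 := h0 u hu (σ v) (hσ v hv)
    simp only [e2 v hv, lie_sub, lie_neg] at h2
    have h3 : ⁅u, σ v⁆ = ⁅σ u, v⁆ := by
      linear_combination (norm := module) (1/3 : ℝ) • h1 + (2/3 : ℝ) • h2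
    refine ⟨h3, ?_⟩
    rw [LieEquiv.map_lie]
    linear_combination (norm := module) (1/2 : ℝ) • h1 + (1/2 : ℝ) • h3
  have hl : ∀ u ∈ N, ∀ v ∈ N, ⁅u, σ v⁆ = -⁅u, v⁆ - σ ⁅u, v⁆ := fun u hu v hv => by
    rw [(key u hu v hv).2]; abel
  have a1 : ⁅⁅x, y⁆, σ z⁆ = -⁅⁅x, y⁆, z⁆ - σ ⁅⁅x, y⁆, z⁆ := hl _ (hbr x hx y hy) z hz
  have a2 : ⁅⁅y, σ z⁆, x⁆ = σ ⁅⁅y, z⁆, x⁆ := by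
    rw [hl y hy z hz, sub_lie, neg_lie, ← (key _ (hbr y hy z hz) x hx).1,
      hl _ (hbr y hy z hz) x hx]
    abel
  have a3 : ⁅⁅σ z, x⁆, y⁆ = σ ⁅⁅z, x⁆, y⁆ := by
    rw [← (key z hz x hx).1, hl z hz x hx, sub_lie, neg_lie, ← (key _ (hbr z hz x hx) y hy).1,
      hl _ (hbr z hz x hx) y hy]
    abel
  have jac : ∀ w : L, ⁅⁅x, y⁆, w⁆ + ⁅⁅y, w⁆, x⁆ + ⁅⁅w, x⁆, y⁆ = 0 := fun w => by
    have h := lie_jacobi x y w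
    rw [← lie_skew x ⁅y, w⁆, ← lie_skew y ⁅w, x⁆, ← lie_skew w ⁅x, y⁆] at h
    rw [← neg_eq_zero, ← h]; abel
  have j1 := jac (σ z)
  rw [a1, a2, a3] at j1
  have j2 : σ ⁅⁅x, y⁆, z⁆ + σ ⁅⁅y, z⁆, x⁆ + σ ⁅⁅z, x⁆, y⁆ = 0 := by
    rw [← map_add, ← map_add, jac z, map_zero]
  have b1 : ⁅⁅x, y⁆, z⁆ = (-2 : ℝ) • σ ⁅⁅x, y⁆, z⁆ := by
    linear_combination (norm := module) j2 - j1
  have b2 : σ ⁅⁅x, y⁆, z⁆ = (-2 : ℝ) • σ (σ ⁅⁅x, y⁆, z⁆) := by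
    rw [← map_smul, ← b1]
  have b3 := hN _ (hbr _ (hbr x hx y hy) z hz)
  linear_combination (norm := module)
    (-1/3 : ℝ) • b1 - (2/3 : ℝ) • b2 + (4/3 : ℝ) • b3

/-- The Killing form of `L` pairs `N` trivially with `G`: for `x ∈ N`, `y ∈ G` the operator
`(ad x ad y)³` vanishes. -/
theorem killingForm_eq_zero_of_nilpotent [FiniteDimensional ℝ L] (G N : Submodule ℝ L)
    (hG : ∀ y ∈ G, ∀ z, ⁅y, z⁆ ∈ G) (hGN : ∀ y ∈ G, ∀ x ∈ N, ⁅y, x⁆ ∈ N)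
    (hnil : ∀ x ∈ N, ∀ y ∈ N, ∀ z ∈ N, ⁅⁅x, y⁆, z⁆ = 0) {x y : L} (hx : x ∈ N) (hy : y ∈ G) :
    killingForm ℝ L x y = 0 := by
  rw [killingForm_apply_apply]
  refine (LinearMap.isNilpotent_trace_of_isNilpotent (R := ℝ) ⟨3, ?_⟩).eq_zero
  ext z
  have h1 : ⁅x, ⁅y, z⁆⁆ ∈ N := by
    rw [← lie_skew]; exact N.neg_mem (hGN _ (hG y hy z) x hx)
  simp only [pow_succ, pow_zero, one_mul, Module.End.mul_apply, LinearMap.comp_apply,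
    LieAlgebra.ad_apply, LinearMap.zero_apply]
  generalize ⁅x, ⁅y, z⁆⁆ = n at h1
  have hm := hGN y hy n h1
  generalize ⁅y, n⁆ = m at hm
  have hym := hGN y hy m hm
  have h0 : ∀ a ∈ N, ∀ b ∈ N, ∀ c ∈ N, ⁅a, ⁅b, c⁆⁆ = 0 := fun a ha b hb c hc => by
    rw [← lie_skew, hnil b hb c hc a ha, neg_zero]
  rw [leibniz_lie y x m, lie_add, h0 x hx _ (hGN y hy x hx) m hm, h0 x hx x hx _ hym, add_zero]

/-! ### The decomposition of `L` and the invariant inner product -/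

/-- The projection of `L` onto the fixed algebra `𝔥` of `σ`, along `𝕍`. -/
noncomputable def fixProj (σ : L ≃ₗ⁅ℝ⁆ L) : L →ₗ[ℝ] L :=
  (1 / 3 : ℝ) • (LinearMap.id + (σ : L →ₗ[ℝ] L) + (σ : L →ₗ[ℝ] L) ∘ₗ (σ : L →ₗ[ℝ] L))

theorem fixProj_apply (σ : L ≃ₗ⁅ℝ⁆ L) (x : L) :
    fixProj σ x = (1 / 3 : ℝ) • (x + σ x + σ (σ x)) := rfl

/-- The projection of `L` onto `𝕍`, along `𝔥`. -/
noncomputable def movProj (σ : L ≃ₗ⁅ℝ⁆ L) : L →ₗ[ℝ] L := LinearMap.id - fixProj σ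

theorem movProj_apply (σ : L ≃ₗ⁅ℝ⁆ L) (x : L) : movProj σ x = x - fixProj σ x := rfl

theorem fixProj_add_movProj (σ : L ≃ₗ⁅ℝ⁆ L) (x : L) : fixProj σ x + movProj σ x = x := by
  rw [movProj_apply]; abel

section
variable {σ : L ≃ₗ⁅ℝ⁆ L}

theorem map_fixProj (h3 : ∀ x, σ (σ (σ x)) = x) (x : L) : σ (fixProj σ x) = fixProj σ x := by
  simp only [fixProj_apply, map_smul, map_add, h3]
  module

theorem movProj_mem (h3 : ∀ x, σ (σ (σ x)) = x) (x : L) :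
    σ (σ (movProj σ x)) + σ (movProj σ x) + movProj σ x = 0 := by
  have h : x + σ x + σ (σ x) = (3 : ℝ) • fixProj σ x := by rw [fixProj_apply]; module
  simp only [movProj_apply, map_sub, map_fixProj h3]
  linear_combination (norm := module) h

theorem fixProj_of_fixed {x : L} (h : σ x = x) : fixProj σ x = x := by
  rw [fixProj_apply, h, h]; module

theorem movProj_of_fixed {x : L} (h : σ x = x) : movProj σ x = 0 := by
  rw [movProj_apply, fixProj_of_fixed h, sub_self]

theorem fixProj_of_mem {x : L} (h : σ (σ x) + σ x + x = 0) : fixProj σ x = 0 := by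
  rw [fixProj_apply, add_assoc, add_comm, add_comm (σ x), h, smul_zero]

theorem movProj_of_mem {x : L} (h : σ (σ x) + σ x + x = 0) : movProj σ x = x := by
  rw [movProj_apply, fixProj_of_mem h, sub_zero]

theorem fixProj_lie {F : L} (h : σ F = F) (x : L) : fixProj σ ⁅F, x⁆ = ⁅F, fixProj σ x⁆ := by
  simp only [fixProj_apply, LieEquiv.map_lie, h, lie_smul, lie_add]

theorem movProj_lie {F : L} (h : σ F = F) (x : L) : movProj σ ⁅F, x⁆ = ⁅F, movProj σ x⁆ := by
  simp only [movProj_apply, fixProj_lie h, lie_sub]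

theorem killingForm_fixed_moved {F v : L} (hF : σ F = F)
    (hv : σ (σ v) + σ v + v = 0) : killingForm ℝ L F v = 0 := by
  have h : ∀ w, killingForm ℝ L F (σ w) = killingForm ℝ L F w := fun w => by
    conv_lhs => rw [← hF]
    exact LieAlgebra.killingForm_of_equiv_apply σ F w
  have h0 := congrArg (killingForm ℝ L F) hv
  rw [map_add, map_add, h, h, map_zero] at h0
  linarith

/-- The operator `v ↦ ⁅F, v⁆` of `𝕍`, where `F` is the `𝔥`-component of `x`, extended to `L` by zero
on `𝔥`. -/
noncomputable def isotropyOp (σ : L ≃ₗ⁅ℝ⁆ L) : L →ₗ[ℝ] Module.End ℝ L where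
  toFun x := LieAlgebra.ad ℝ L (fixProj σ x) * movProj σ
  map_add' x y := by simp [add_mul]
  map_smul' r x := by simp

theorem isotropyOp_apply (x y : L) : isotropyOp σ x y = ⁅fixProj σ x, movProj σ y⁆ := rfl

/-- The Riemannian hypothesis extends the invariant inner product from `𝕍` to all of `L`: on `𝔥` the
negative of the trace form of the isotropy representation is used, which is definite because
that representation is faithful and skew. -/
theorem exists_invariant_form [FiniteDimensional ℝ L] (h3 : ∀ x, σ (σ (σ x)) = x)
    (hinj : ∀ F, σ F = F → (∀ v, σ (σ v) + σ v + v = 0 → ⁅F, v⁆ = (0 : L)) → F = 0)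
    (g : L →ₗ[ℝ] L →ₗ[ℝ] ℝ)
    (hsymm : ∀ v w, σ (σ v) + σ v + v = 0 → σ (σ w) + σ w + w = 0 → g v w = g w v)
    (hpos : ∀ v, σ (σ v) + σ v + v = 0 → v ≠ 0 → 0 < g v v)
    (hskew : ∀ F v w, σ F = F → σ (σ v) + σ v + v = 0 → σ (σ w) + σ w + w = 0 →
      g ⁅F, v⁆ w + g v ⁅F, w⁆ = 0) :
    ∃ Q : L →ₗ[ℝ] L →ₗ[ℝ] ℝ, (∀ x y, Q x y = Q y x) ∧ (∀ x, x ≠ 0 → 0 < Q x x) ∧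
      ∀ F, σ F = F → ∀ x y, Q ⁅F, x⁆ y + Q x ⁅F, y⁆ = 0 := by
  obtain ⟨e, hes, hep⟩ := exists_posDef_form L
  have hpm : ∀ x, fixProj σ x = 0 → movProj σ x = 0 → x = 0 := fun x h1 h2 => by
    rw [← fixProj_add_movProj σ x, h1, h2, add_zero]
  have hg0 : ∀ x, 0 ≤ g (movProj σ x) (movProj σ x) := fun x => by
    rcases eq_or_ne (movProj σ x) 0 with h | h
    · simp [h]
    · exact (hpos _ (movProj_mem h3 x) h).le
  have he0 : ∀ x, 0 ≤ e x x := fun x => by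
    rcases eq_or_ne x 0 with rfl | h
    · simp
    · exact (hep _ h).le
  -- An auxiliary inner product, with an arbitrary `𝔥`-part, making all isotropy operators skew.
  let Q₀ : L →ₗ[ℝ] L →ₗ[ℝ] ℝ :=
    g.compl₁₂ (movProj σ) (movProj σ) + e.compl₁₂ (fixProj σ) (fixProj σ)
  have hQ₀ : ∀ x y, Q₀ x y = g (movProj σ x) (movProj σ y) + e (fixProj σ x) (fixProj σ y) :=
    fun x y => rfl
  have hQ₀s : ∀ x y, Q₀ x y = Q₀ y x := fun x y => by
    rw [hQ₀, hQ₀, hsymm _ _ (movProj_mem h3 x) (movProj_mem h3 y), hes]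
  have hQ₀p : ∀ x, x ≠ 0 → 0 < Q₀ x x := fun x hx => by
    rw [hQ₀]
    by_cases h : movProj σ x = 0
    · have := hep (fixProj σ x) fun h' => hx (hpm x h' h)
      linarith [hg0 x]
    · have := hpos _ (movProj_mem h3 x) h
      linarith [he0 (fixProj σ x)]
  have hop : ∀ x, (LinearMap.trace ℝ L (isotropyOp σ x * isotropyOp σ x) ≤ 0) ∧
      (LinearMap.trace ℝ L (isotropyOp σ x * isotropyOp σ x) = 0 → isotropyOp σ x = 0) := by
    intro x
    refine trace_sq_of_skew_s4 Q₀ hQ₀s hQ₀p _ fun y z => ?_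
    have hx := map_fixProj h3 x
    have hm := movProj_mem h3
    have hfm : ∀ y, fixProj σ (movProj σ y) = 0 := fun y => fixProj_of_mem (hm y)
    have hmm : ∀ y, movProj σ (movProj σ y) = movProj σ y := fun y => movProj_of_mem (hm y)
    simp only [hQ₀, isotropyOp_apply, fixProj_lie hx, movProj_lie hx, hfm, hmm, lie_zero,
      map_zero, LinearMap.zero_apply, add_zero]
    exact hskew _ _ _ hx (hm y) (hm z)
  have hop0 : ∀ x, isotropyOp σ x = 0 → fixProj σ x = 0 := fun x hx => by
    refine hinj _ (map_fixProj h3 x) fun v hv => ?_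
    have := LinearMap.congr_fun hx v
    rwa [isotropyOp_apply, movProj_of_mem hv] at this
  let Q : L →ₗ[ℝ] L →ₗ[ℝ] ℝ := g.compl₁₂ (movProj σ) (movProj σ) -
    ((LinearMap.mul ℝ (Module.End ℝ L)).compl₁₂ (isotropyOp σ) (isotropyOp σ)).compr₂
      (LinearMap.trace ℝ L)
  have hQ : ∀ x y, Q x y = g (movProj σ x) (movProj σ y) -
    LinearMap.trace ℝ L (isotropyOp σ x * isotropyOp σ y) := fun x y => rfl
  refine ⟨Q, fun x y => ?_, fun x hx => ?_, fun F hF x y => ?_⟩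
  · rw [hQ, hQ, hsymm _ _ (movProj_mem h3 x) (movProj_mem h3 y), LinearMap.trace_mul_comm]
  · rw [hQ]
    by_cases h : movProj σ x = 0
    · have h1 := (hop x).1
      have h2 : LinearMap.trace ℝ L (isotropyOp σ x * isotropyOp σ x) ≠ 0 := fun h' =>
        hx (hpm x (hop0 x ((hop x).2 h')) h)
      have := lt_of_le_of_ne h1 h2
      linarith [hg0 x]
    · have := hpos _ (movProj_mem h3 x) h
      linarith [(hop x).1]
  · have hcomm : ∀ x, isotropyOp σ ⁅F, x⁆ =
        LieAlgebra.ad ℝ L F * isotropyOp σ x - isotropyOp σ x * LieAlgebra.ad ℝ L F := by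
      intro x
      ext z
      simp only [LinearMap.sub_apply, Module.End.mul_apply, isotropyOp_apply, LieAlgebra.ad_apply,
        fixProj_lie hF, movProj_lie hF, lie_lie]
    have hg := hskew F _ _ hF (movProj_mem h3 x) (movProj_mem h3 y)
    have ht := LinearMap.trace_mul_comm ℝ (LieAlgebra.ad ℝ L F) (isotropyOp σ x * isotropyOp σ y)
    rw [hQ, hQ, hcomm, hcomm, movProj_lie hF, movProj_lie hF, sub_mul, mul_sub, map_sub, map_sub]
    simp only [mul_assoc] at ht ⊢
    linarith

/-- The Killing form is negative definite on `𝔥`. -/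
theorem fixed_eq_zero_of_killingForm [FiniteDimensional ℝ L] (Q : L →ₗ[ℝ] L →ₗ[ℝ] ℝ)
    (hs : ∀ x y, Q x y = Q y x) (hp : ∀ x, x ≠ 0 → 0 < Q x x)
    (hinj : ∀ F, σ F = F → (∀ v, σ (σ v) + σ v + v = 0 → ⁅F, v⁆ = (0 : L)) → F = 0)
    {F : L} (hF : σ F = F) (hQ : ∀ x y, Q ⁅F, x⁆ y + Q x ⁅F, y⁆ = 0)
    (h : killingForm ℝ L F F = 0) : F = 0 := by
  rw [killingForm_apply_apply] at h
  have := (trace_sq_of_skew_s4 Q hs hp (LieAlgebra.ad ℝ L F) hQ).2 h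
  exact hinj F hF fun v _ => LinearMap.congr_fun this v

/-- Elements of `W` lie in the kernel of the Killing form of `L`. -/
theorem killingForm_moved_eq_zero (h3 : ∀ x, σ (σ (σ x)) = x) {x : L}
    (hx : σ (σ x) + σ x + x = 0)
    (h : ∀ w, σ (σ w) + σ w + w = 0 → killingForm ℝ L x w = 0) (z : L) :
    killingForm ℝ L x z = 0 := by
  rw [← fixProj_add_movProj σ z, map_add, h _ (movProj_mem h3 z), add_zero,
    LieModule.traceForm_comm, killingForm_fixed_moved (map_fixProj h3 z) hx]

theorem map_moved {x : L} (hx : σ (σ x) + σ x + x = 0) : σ (σ (σ x)) + σ (σ x) + σ x = 0 := by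
  rw [← map_add, ← map_add, hx, map_zero]

theorem mem_of_fixProj_eq_zero {x : L} (hx : fixProj σ x = 0) : σ (σ x) + σ x + x = 0 := by
  rw [fixProj_apply] at hx
  linear_combination (norm := module) (3 : ℝ) • hx

/-! ### Ideals of the transvection algebra -/

section Transvection

variable {gT : LieSubalgebra ℝ L}
  (hgT : gT.toSubmodule = Submodule.span ℝ ({x | σ (σ x) + σ x + x = 0} ∪
    {z : L | ∃ v ∈ {x | σ (σ x) + σ x + x = 0}, ∃ w ∈ {x | σ (σ x) + σ x + x = 0}, z = ⁅v, w⁆}))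

include hgT

theorem moved_mem_transvection {x : L} (hx : σ (σ x) + σ x + x = 0) : x ∈ gT := by
  rw [← LieSubalgebra.mem_toSubmodule, hgT]
  exact Submodule.subset_span (Or.inl hx)

theorem transvection_induction {P : Submodule ℝ L} (h1 : ∀ v, σ (σ v) + σ v + v = 0 → v ∈ P)
    (h2 : ∀ v w, σ (σ v) + σ v + v = 0 → σ (σ w) + σ w + w = 0 → ⁅v, w⁆ ∈ P) {x : L}
    (hx : x ∈ gT) : x ∈ P := by
  rw [← LieSubalgebra.mem_toSubmodule, hgT] at hx
  refine Submodule.span_le.mpr ?_ hx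
  rintro y (hy | ⟨v, hv, w, hw, rfl⟩)
  · exact h1 y hy
  · exact h2 v w hv hw

theorem map_mem_transvection {x : L} (hx : x ∈ gT) : σ x ∈ gT := by
  refine transvection_induction hgT (P := gT.toSubmodule.comap (σ : L →ₗ[ℝ] L)) ?_ ?_ hx
  · intro v hv
    exact moved_mem_transvection hgT (map_moved hv)
  · intro v w hv hw
    change σ ⁅v, w⁆ ∈ gT
    rw [LieEquiv.map_lie]
    exact gT.lie_mem (moved_mem_transvection hgT (map_moved hv))
      (moved_mem_transvection hgT (map_moved hw))

/-- The transvection algebra is an ideal of `L`. -/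
theorem lie_mem_transvection (h3 : ∀ x, σ (σ (σ x)) = x) {x : L} (hx : x ∈ gT) (z : L) :
    ⁅x, z⁆ ∈ gT := by
  have hFv : ∀ F v, σ F = F → σ (σ v) + σ v + v = 0 → σ (σ ⁅F, v⁆) + σ ⁅F, v⁆ + ⁅F, v⁆ = 0 := by
    intro F v hF hv
    refine mem_of_fixProj_eq_zero ?_
    rw [fixProj_lie hF, fixProj_of_mem hv, lie_zero]
  have hF : ⁅fixProj σ z, x⁆ ∈ gT := by
    have hfz := map_fixProj h3 z
    refine transvection_induction hgT
      (P := gT.toSubmodule.comap (LieAlgebra.ad ℝ L (fixProj σ z))) ?_ ?_ hx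
    · intro v hv
      exact moved_mem_transvection hgT (hFv _ v hfz hv)
    · intro v w hv hw
      change ⁅fixProj σ z, ⁅v, w⁆⁆ ∈ gT
      rw [leibniz_lie]
      exact gT.add_mem
        (gT.lie_mem (moved_mem_transvection hgT (hFv _ v hfz hv)) (moved_mem_transvection hgT hw))
        (gT.lie_mem (moved_mem_transvection hgT hv) (moved_mem_transvection hgT (hFv _ w hfz hw)))
  rw [← fixProj_add_movProj σ z, lie_add, ← lie_skew]
  exact gT.add_mem (gT.neg_mem hF) (gT.lie_mem hx (moved_mem_transvection hgT (movProj_mem h3 z)))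

/-- The restriction of `σ` to the transvection algebra. -/
def transvectionAut : gT →ₗ⁅ℝ⁆ gT where
  toFun x := ⟨σ x, map_mem_transvection hgT x.2⟩
  map_add' x y := by ext; simp
  map_smul' r x := by ext; simp
  map_lie' {x y} := by ext; exact LieEquiv.map_lie σ (x : L) (y : L)

theorem coe_transvectionAut (x : gT) : (transvectionAut hgT x : L) = σ x := rfl

/-- If `J ⊆ 𝕍` is a `σ`-stable ideal of the transvection algebra then `[[J, J], J] = 0`. -/
theorem ideal_lie_lie_eq_zero (J : LieIdeal ℝ gT)
    (hs : ∀ x ∈ J, transvectionAut hgT x ∈ J)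
    (hJ : ∀ x ∈ J, σ (σ (x : L)) + σ (x : L) + (x : L) = 0) :
    ∀ x ∈ J, ∀ y ∈ J, ∀ z ∈ J, ⁅⁅x, y⁆, z⁆ = 0 := by
  intro x hx y hy z hz
  ext
  refine lie_lie_eq_zero_of_orderThree σ (J.toSubmodule.map gT.toSubmodule.subtype) ?_ ?_ ?_
    ⟨x, hx, rfl⟩ ⟨y, hy, rfl⟩ ⟨z, hz, rfl⟩
  · rintro _ ⟨a, ha, rfl⟩
    exact hJ a ha
  · rintro _ ⟨a, ha, rfl⟩
    exact ⟨_, hs a ha, rfl⟩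
  · rintro _ ⟨(a : gT), ha, rfl⟩ _ ⟨(b : gT), hb, rfl⟩
    exact ⟨⁅a, b⁆, lie_mem_right ℝ gT J a b hb, rfl⟩

theorem ideal_killingForm_eq_zero [FiniteDimensional ℝ L] (h3 : ∀ x, σ (σ (σ x)) = x)
    (J : LieIdeal ℝ gT)
    (hs : ∀ x ∈ J, transvectionAut hgT x ∈ J)
    (hJ : ∀ x ∈ J, σ (σ (x : L)) + σ (x : L) + (x : L) = 0) (x y : gT) (hx : x ∈ J) :
    killingForm ℝ L (x : L) (y : L) = 0 := by
  refine killingForm_eq_zero_of_nilpotent gT.toSubmodule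
    (J.toSubmodule.map gT.toSubmodule.subtype) ?_ ?_ ?_ ⟨x, hx, rfl⟩ y.2
  · intro y hy z
    exact lie_mem_transvection hgT h3 hy z
  · rintro y hy _ ⟨a, ha, rfl⟩
    exact ⟨⁅(⟨y, hy⟩ : gT), a⁆, J.lie_mem ha, rfl⟩
  · rintro _ ⟨a, ha, rfl⟩ _ ⟨b, hb, rfl⟩ _ ⟨c, hc, rfl⟩
    exact congrArg Subtype.val (ideal_lie_lie_eq_zero hgT J hs hJ a ha b hb c hc)

/-- If `[I, I] ⊆ 𝕍`, then `I ⊆ 𝕍`. The `𝔥`-component `F` of an element of `I` is again in `I`, and it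
is `B`-orthogonal to `𝕍 + [𝕍, 𝕍]`, hence to itself. -/
theorem ideal_moved_of_derived_moved [FiniteDimensional ℝ L] (h3 : ∀ x, σ (σ (σ x)) = x)
    (hinj : ∀ F, σ F = F → (∀ v, σ (σ v) + σ v + v = 0 → ⁅F, v⁆ = (0 : L)) → F = 0)
    (Q : L →ₗ[ℝ] L →ₗ[ℝ] ℝ) (hQs : ∀ x y, Q x y = Q y x) (hQp : ∀ x, x ≠ 0 → 0 < Q x x)
    (hQ : ∀ F, σ F = F → ∀ x y, Q ⁅F, x⁆ y + Q x ⁅F, y⁆ = 0)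
    (I : LieIdeal ℝ gT) (hs : ∀ x ∈ I, transvectionAut hgT x ∈ I)
    (hs' : ∀ x ∈ ⁅I, I⁆, transvectionAut hgT x ∈ ⁅I, I⁆)
    (hI : ∀ x ∈ ⁅I, I⁆, σ (σ (x : L)) + σ (x : L) + (x : L) = 0) :
    ∀ x ∈ I, σ (σ (x : L)) + σ (x : L) + (x : L) = 0 := by
  intro x hx
  refine mem_of_fixProj_eq_zero ?_
  let F : gT := (1 / 3 : ℝ) •
    (x + transvectionAut hgT x + transvectionAut hgT (transvectionAut hgT x))
  have hFx : (F : L) = fixProj σ x := rfl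
  have hFI : F ∈ I := I.smul_mem _ (I.add_mem (I.add_mem hx (hs x hx)) (hs _ (hs x hx)))
  rw [← hFx]
  have hF : σ F = F := by rw [hFx, map_fixProj h3]
  have hlie : ∀ v w, σ (σ v) + σ v + v = 0 → σ (σ w) + σ w + w = 0 →
      killingForm ℝ L ⁅(F : L), v⁆ w = 0 := by
    intro v w hv hw
    obtain ⟨u, hu⟩ := exists_sq_of_skew Q hQp (LieAlgebra.ad ℝ L F) (hQ F hF) v
    have hu' := congrArg (movProj σ) hu
    simp only [LieAlgebra.ad_apply, movProj_lie hF, movProj_of_mem hv] at hu'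
    let u' : gT := ⟨movProj σ u, moved_mem_transvection hgT (movProj_mem h3 u)⟩
    have hFu : ⁅F, u'⁆ ∈ I := lie_mem_left ℝ gT I F u' hFI
    rw [hu']
    exact ideal_killingForm_eq_zero hgT h3 ⁅I, I⁆ hs' hI ⁅F, ⁅F, u'⁆⁆
      ⟨w, moved_mem_transvection hgT hw⟩ (LieSubmodule.lie_mem_lie hFI hFu)
  refine fixed_eq_zero_of_killingForm Q hQs hQp hinj hF (hQ F hF) ?_
  refine transvection_induction hgT (P := LinearMap.ker (killingForm ℝ L (F : L))) ?_ ?_ F.2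
  · intro v hv
    exact killingForm_fixed_moved hF hv
  · intro v w hv hw
    rw [LinearMap.mem_ker, ← LieModule.traceForm_apply_lie_apply]
    exact hlie v w hv hw

theorem derivedSeries_stable (I : LieIdeal ℝ gT) (hs : ∀ x ∈ I, transvectionAut hgT x ∈ I)
    (k : ℕ) : ∀ x ∈ LieAlgebra.derivedSeriesOfIdeal ℝ gT k I,
      transvectionAut hgT x ∈ LieAlgebra.derivedSeriesOfIdeal ℝ gT k I := by
  induction k with
  | zero => exact hs
  | succ k ih =>
    rw [LieAlgebra.derivedSeriesOfIdeal_succ]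
    intro x hx
    have h : LieAlgebra.derivedSeriesOfIdeal ℝ gT k I ≤
        (LieAlgebra.derivedSeriesOfIdeal ℝ gT k I).comap (transvectionAut hgT) := ih
    exact LieIdeal.comap_bracket_le (transvectionAut hgT) (LieSubmodule.mono_lie h h hx)

/-- The preimage of the radical under `σ` is a solvable ideal. -/
theorem radical_stable [FiniteDimensional ℝ L] (h3 : ∀ x, σ (σ (σ x)) = x) :
    ∀ x ∈ LieAlgebra.radical ℝ gT, transvectionAut hgT x ∈ LieAlgebra.radical ℝ gT := by
  set s := transvectionAut hgT with hsdef
  set r := LieAlgebra.radical ℝ gT with hr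
  have hle : ∀ k, LieAlgebra.derivedSeriesOfIdeal ℝ gT k (r.comap s) ≤
      (LieAlgebra.derivedSeriesOfIdeal ℝ gT k r).comap s := by
    intro k
    induction k with
    | zero => exact le_rfl
    | succ k ih =>
      rw [LieAlgebra.derivedSeriesOfIdeal_succ, LieAlgebra.derivedSeriesOfIdeal_succ]
      exact (LieSubmodule.mono_lie ih ih).trans (LieIdeal.comap_bracket_le s)
  obtain ⟨k, hk⟩ := (LieAlgebra.isSolvable_iff ℝ r).mp inferInstance
  rw [LieIdeal.derivedSeries_eq_bot_iff] at hk
  have hsol : LieAlgebra.IsSolvable (r.comap s) := by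
    refine LieAlgebra.IsSolvable.mk (R := ℝ) (k := k) ?_
    rw [LieIdeal.derivedSeries_eq_bot_iff, eq_bot_iff]
    intro x hx
    have h := hle k hx
    rw [hk, LieIdeal.mem_comap, LieSubmodule.mem_bot] at h
    have h' : σ (x : L) = 0 := congrArg Subtype.val h
    rw [LieSubmodule.mem_bot]
    ext
    exact (map_eq_zero_iff σ σ.injective).mp h'
  have hJ : r.comap s ≤ r := (LieAlgebra.LieIdeal.solvable_iff_le_radical ℝ gT _).mp hsol
  have hback : ∀ x, s x ∈ r → x ∈ r := fun x hx => hJ (LieIdeal.mem_comap.mpr hx)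
  intro x hx
  -- `r` is stable under `s⁻¹`, hence under `s = (s⁻¹)²`.
  refine hback _ (hback _ ?_)
  have : s (s (s x)) = x := by ext; exact h3 x
  rwa [this]

theorem radical_moved [FiniteDimensional ℝ L] (h3 : ∀ x, σ (σ (σ x)) = x)
    (hinj : ∀ F, σ F = F → (∀ v, σ (σ v) + σ v + v = 0 → ⁅F, v⁆ = (0 : L)) → F = 0)
    (Q : L →ₗ[ℝ] L →ₗ[ℝ] ℝ) (hQs : ∀ x y, Q x y = Q y x) (hQp : ∀ x, x ≠ 0 → 0 < Q x x)
    (hQ : ∀ F, σ F = F → ∀ x y, Q ⁅F, x⁆ y + Q x ⁅F, y⁆ = 0) :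
    ∀ x ∈ LieAlgebra.radical ℝ gT, σ (σ (x : L)) + σ (x : L) + (x : L) = 0 := by
  set r := LieAlgebra.radical ℝ gT with hr
  have hst := derivedSeries_stable hgT r (radical_stable hgT h3)
  obtain ⟨k, hk⟩ := (LieAlgebra.isSolvable_iff ℝ r).mp inferInstance
  rw [LieIdeal.derivedSeries_eq_bot_iff] at hk
  have hdesc : ∀ j, (∀ x ∈ LieAlgebra.derivedSeriesOfIdeal ℝ gT j r,
      σ (σ (x : L)) + σ (x : L) + (x : L) = 0) → ∀ x ∈ r, σ (σ (x : L)) + σ (x : L) + (x : L) = 0 := by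
    intro j
    induction j with
    | zero => exact id
    | succ j ih =>
      intro h
      have hs' := hst (j + 1)
      rw [LieAlgebra.derivedSeriesOfIdeal_succ] at h hs'
      exact ih (ideal_moved_of_derived_moved hgT h3 hinj Q hQs hQp hQ _ (hst j) hs' h)
  refine hdesc k ?_
  rw [hk]
  intro x hx
  rw [LieSubmodule.mem_bot] at hx
  simp [hx]

/-- A `σ`-stable ideal contained in `𝕍` has trivial second derived ideal. -/
theorem isSolvable_of_moved (J : LieIdeal ℝ gT)
    (hs : ∀ x ∈ J, transvectionAut hgT x ∈ J)
    (hJ : ∀ x ∈ J, σ (σ (x : L)) + σ (x : L) + (x : L) = 0) : LieAlgebra.IsSolvable J := by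
  refine LieAlgebra.IsSolvable.mk (R := ℝ) (k := 2) ?_
  rw [LieIdeal.derivedSeries_eq_bot_iff, LieAlgebra.derivedSeriesOfIdeal_succ,
    LieAlgebra.derivedSeriesOfIdeal_succ, LieAlgebra.derivedSeriesOfIdeal_zero, eq_bot_iff,
    LieSubmodule.lie_le_iff]
  intro x hx m hm
  rw [LieSubmodule.mem_bot]
  rw [← LieSubmodule.mem_toSubmodule, LieSubmodule.lieIdeal_oper_eq_linear_span'] at hx
  have hmJ : m ∈ J := LieSubmodule.lie_le_right J J hm
  induction hx using Submodule.span_induction with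
  | mem x hx =>
    obtain ⟨a, ha, b, hb, rfl⟩ := hx
    exact ideal_lie_lie_eq_zero hgT J hs hJ a ha b hb m hmJ
  | zero => simp
  | add x y _ _ h1 h2 => rw [add_lie, h1, h2, add_zero]
  | smul c x _ h => rw [smul_lie, h, smul_zero]

/-- The kernel of the Killing form of `L`, intersected with the transvection algebra, is an ideal
contained in `𝕍`, hence solvable. -/
theorem mem_radical_of_killingForm [FiniteDimensional ℝ L] (h3 : ∀ x, σ (σ (σ x)) = x)
    (hneg : ∀ F, σ F = F → killingForm ℝ L F F = 0 → F = 0) {x : gT}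
    (hxV : σ (σ (x : L)) + σ (x : L) + (x : L) = 0)
    (hx : ∀ w, σ (σ w) + σ w + w = 0 → killingForm ℝ L (x : L) w = 0) :
    x ∈ LieAlgebra.radical ℝ gT := by
  have hker : ∀ y : L, (∀ z, killingForm ℝ L y z = 0) → σ (σ y) + σ y + y = 0 := by
    intro y hy
    refine mem_of_fixProj_eq_zero (hneg _ (map_fixProj h3 y) ?_)
    have h := hy (fixProj σ y)
    nth_rewrite 1 [← fixProj_add_movProj σ y] at h
    rwa [map_add, LinearMap.add_apply, LieModule.traceForm_comm ℝ L L (movProj σ y),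
      killingForm_fixed_moved (map_fixProj h3 y) (movProj_mem h3 y), add_zero] at h
  let W : LieIdeal ℝ gT :=
    { (LinearMap.ker (killingForm ℝ L)).comap gT.toSubmodule.subtype with
      lie_mem := by
        intro a m hm
        change killingForm ℝ L ((⁅a, m⁆ : gT) : L) = 0
        have hm' : killingForm ℝ L (m : L) = 0 := hm
        ext z
        rw [LieSubalgebra.coe_bracket, LieModule.traceForm_apply_lie_apply', hm']
        simp }
  have hW : ∀ m : gT, m ∈ W ↔ ∀ z, killingForm ℝ L (m : L) z = 0 := fun m =>
    ⟨fun h z => LinearMap.congr_fun (show killingForm ℝ L (m : L) = 0 from h) z,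
      fun h => show killingForm ℝ L (m : L) = 0 from LinearMap.ext h⟩
  have hsol : LieAlgebra.IsSolvable W := by
    refine isSolvable_of_moved hgT W (fun m hm => ?_) fun m hm => hker _ ((hW m).mp hm)
    rw [hW] at hm ⊢
    intro z
    have := LieAlgebra.killingForm_of_equiv_apply σ (m : L) (σ.symm z)
    rwa [LieEquiv.apply_symm_apply, hm] at this
  exact (LieAlgebra.LieIdeal.solvable_iff_le_radical ℝ gT W).mp hsol
    ((hW x).mpr (killingForm_moved_eq_zero h3 hxV hx))

end Transvection

end

end ThreeSymmetric

/-- Under the Riemannian hypothesis, the radical (maximal solvable ideal) of the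
transvection algebra `𝔤̲ = 𝕍 + [𝕍,𝕍]` equals `W = {v ∈ 𝕍 : B(v,w) = 0 ∀ w ∈ 𝕍}`;
in particular it is contained in `𝕍`. -/
theorem radical_of_transvection_eq_W
    {L : Type*} [LieRing L] [LieAlgebra ℝ L] [FiniteDimensional ℝ L]
    (σ : L ≃ₗ⁅ℝ⁆ L)
    (hσ3 : ∀ x, σ (σ (σ x)) = x)
    (hσne : ∃ x, σ x ≠ x)
    (H V : Set L)
    (hH : H = {x | σ x = x})
    (hV : V = {x | σ (σ x) + σ x + x = 0})
    (hinj : ∀ F ∈ H, (∀ v ∈ V, ⁅F, v⁆ = (0 : L)) → F = 0)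
    (g : L →ₗ[ℝ] L →ₗ[ℝ] ℝ)
    (hsymm : ∀ v ∈ V, ∀ w ∈ V, g v w = g w v)
    (hpos : ∀ v ∈ V, v ≠ 0 → 0 < g v v)
    (hskew : ∀ F ∈ H, ∀ v ∈ V, ∀ w ∈ V, g ⁅F, v⁆ w + g v ⁅F, w⁆ = 0)
    (gT : LieSubalgebra ℝ L)
    (hgT : gT.toSubmodule
      = Submodule.span ℝ (V ∪ {z : L | ∃ v ∈ V, ∃ w ∈ V, z = ⁅v, w⁆})) :
    ∀ x : gT, x ∈ LieAlgebra.radical ℝ gT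
      ↔ ((x : L) ∈ V ∧ ∀ w ∈ V, killingForm ℝ L (x : L) w = 0) := by
  subst hH hV
  obtain ⟨Q, hQs, hQp, hQ⟩ := exists_invariant_form hσ3 hinj g
    (fun v w hv hw => hsymm v hv w hw) hpos (fun F v w hF hv hw => hskew F hF v hv w hw)
  have hneg : ∀ F, σ F = F → killingForm ℝ L F F = 0 → F = 0 := fun F hF h =>
    fixed_eq_zero_of_killingForm Q hQs hQp hinj hF (hQ F hF) h
  intro x
  refine ⟨fun hx => ?_, fun hx => mem_radical_of_killingForm hgT hσ3 hneg hx.1 hx.2⟩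
  have hmov := radical_moved hgT hσ3 hinj Q hQs hQp hQ
  refine ⟨hmov x hx, fun w hw => ?_⟩
  exact ideal_killingForm_eq_zero hgT hσ3 _ (radical_stable hgT hσ3) hmov x
    ⟨w, moved_mem_transvection hgT hw⟩ hx
end

section
/- Let 𝔤 be a finite-dimensional real semisimple Lie algebra and σ a Lie algebra automorphism of 𝔤 with σ³ = id and σ ≠ id. Set 𝔥 = ker(σ − id) and 𝕍 = ker(σ² + σ + id). Then span{[F,v] : F ∈ 𝔥, v ∈ 𝕍} = 𝕍 and {v ∈ 𝕍 : [F,v] = 0 for all F ∈ 𝔥} = 0. -/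
/-!
Write `κ` for the Killing form, which is nondegenerate by Cartan's criterion and invariant under
`σ`, and write `𝔥` for the fixed points of `σ` and `𝕍` for the kernel of `σ² + σ + 1`.

*No fixed vectors.* Let `v ∈ 𝕍` commute with `𝔥`. Invariance of `κ` gives `[v, 𝕍] ⊆ 𝕍`, because
`κ([v, u], w) = κ(u, [w, v]) = 0` for `w ∈ 𝔥`. The relation
`(σ² + σ + 1) [v, u] = 0`, taken for `u` and for `σ u`, gives the twisted commutation rule `[v, σ z] = σ² [v, z]` for every `z`
(`lie_map_of_centralizes`). With `A = ad v`, `B = ad u` and `S = σ` this reads `A S = S² A`, while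
`ad (σ u) = S B S⁻¹`. Taking traces in `ad [v, σ u] = ad (σ² [v, u])`, multiplied by `S`, gives
`κ(v, σ² u) - κ(v, u) = κ(v, σ u) - κ(v, σ² u)` (`two_mul_trace_eq`). For `u ∈ 𝕍` the three values
of `κ` add up to `0`, so `κ(v, σ² u) = 0`. Hence `v` is orthogonal to `𝕍`; it is also orthogonal
to `𝔥`, so `v = 0`.

After complexification, where `𝕍` is the sum of the two nontrivial eigenspaces of `σ`, this says
that a vector of an eigenspace commuting with `𝔥` acts nontrivially only from its own eigenspace
to the other one.

*Spanning.* This is dual to the first part. If `y = h + t` with `h ∈ 𝔥`, `t ∈ 𝕍` is orthogonal to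
`[𝔥, 𝕍]`, then so is `t`, hence `[𝔥, t] ⊆ 𝕍` is orthogonal to `𝕍` and to `𝔥`. Thus `[𝔥, t] = 0`,
so `t = 0`. Therefore `[𝔥, 𝕍]^⊥ ⊆ 𝔥 ⊆ 𝕍^⊥`, and taking orthogonals again gives `𝕍 ⊆ [𝔥, 𝕍]`.
-/

namespace OrderThree

open LieAlgebra LinearMap

variable {L : Type*} [LieRing L] [LieAlgebra ℝ L] (σ : L ≃ₗ⁅ℝ⁆ L)

/-- Trace identity behind the vanishing of `κ(v, u)`, for `A = ad v`, `B = ad u`, `S = σ`. The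
three traces are `κ(v, σ² u)`, `κ(v, u)` and `κ(v, σ u)`. -/
lemma two_mul_trace_eq {A B S : Module.End ℝ L} (hS : S * S * S = 1) (hAS : A * S = S * S * A)
    (hcomm : A * (S * B * (S * S)) - S * B * (S * S) * A = S * S * (A * B - B * A) * S) :
    2 * trace ℝ L (A * (S * S * B * S)) =
      trace ℝ L (A * B) + trace ℝ L (A * (S * B * (S * S))) := by
  have hAS2 : A * (S * S) = S * A := by
    calc A * (S * S) = (A * S) * S := by noncomm_ring
      _ = S * S * A * S := by rw [hAS]
      _ = S * S * (A * S) := by noncomm_ring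
      _ = (S * S * S) * S * A := by rw [hAS]; noncomm_ring
      _ = S * A := by rw [hS, one_mul]
  have e2 : trace ℝ L (A * (S * S * B * S)) = trace ℝ L (A * B * (S * S)) := by
    rw [show A * (S * S * B * S) = A * (S * S) * (B * S) by noncomm_ring, hAS2, mul_assoc,
      trace_mul_comm]
    congr 1
  have e1 : trace ℝ L (A * (S * B * (S * S))) = trace ℝ L (A * B * S) := by
    rw [show A * (S * B * (S * S)) = A * S * (B * (S * S)) by noncomm_ring, hAS,
      show S * S * A * (B * (S * S)) = S * S * (A * B * (S * S)) by noncomm_ring, trace_mul_comm,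
      show A * B * (S * S) * (S * S) = A * B * ((S * S * S) * S) by noncomm_ring, hS, one_mul]
  have hl1 : S * (A * (S * B * (S * S))) = A * B * (S * S) := by
    calc _ = S * (A * S) * (B * (S * S)) := by noncomm_ring
      _ = (S * S * S) * (A * B * (S * S)) := by rw [hAS]; noncomm_ring
      _ = _ := by rw [hS, one_mul]
  have hr : S * (S * S * (A * B - B * A) * S) = A * B * S - B * (A * S) := by
    calc _ = (S * S * S) * (A * B * S - B * (A * S)) := by noncomm_ring
      _ = _ := by rw [hS, one_mul]
  have t2 : trace ℝ L (S * (S * B * (S * S) * A)) = trace ℝ L (A * B) := by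
    rw [show S * (S * B * (S * S) * A) = (S * S) * (B * (S * S) * A) by noncomm_ring,
      trace_mul_comm,
      show B * (S * S) * A * (S * S) = B * (S * S) * (A * (S * S)) by noncomm_ring, hAS2,
      show B * (S * S) * (S * A) = B * ((S * S * S) * A) by noncomm_ring, hS, one_mul,
      trace_mul_comm]
  have t4 : trace ℝ L (B * (A * S)) = trace ℝ L (A * B * (S * S)) := by
    rw [hAS, show B * (S * S * A) = (B * (S * S)) * A by noncomm_ring, trace_mul_comm, mul_assoc]
  have key := congrArg (fun X => trace ℝ L (S * X)) hcomm
  simp only [mul_sub S, map_sub] at key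
  rw [hl1, t2, hr, map_sub, t4] at key
  rw [e2, e1]
  linarith

lemma exists_decomp (hσ3 : ∀ x, σ (σ (σ x)) = x) (z : L) :
    ∃ h t, σ h = h ∧ σ (σ t) + σ t + t = 0 ∧ z = h + t := by
  refine ⟨(1 / 3 : ℝ) • (z + σ z + σ (σ z)), z - (1 / 3 : ℝ) • (z + σ z + σ (σ z)), ?_, ?_, ?_⟩
  · simp only [map_smul, map_add, hσ3]; module
  · simp only [map_smul, map_add, map_sub, hσ3]; module
  · module

lemma killing_fixed_left {h t : L} (hh : σ h = h) (ht : σ (σ t) + σ t + t = 0) :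
    killingForm ℝ L h t = 0 := by
  have h1 : killingForm ℝ L h (σ t) = killingForm ℝ L h t := by
    conv_lhs => rw [← hh]
    exact killingForm_of_equiv_apply σ h t
  have h2 : killingForm ℝ L h (σ (σ t)) = killingForm ℝ L h (σ t) := by
    conv_lhs => rw [← hh]
    exact killingForm_of_equiv_apply σ h (σ t)
  have := congrArg (killingForm ℝ L h) ht
  simp only [map_add, map_zero] at this
  linarith

lemma map_sq_lie_add {F v : L} (hF : σ F = F) (hv : σ (σ v) + σ v + v = 0) :
    σ (σ ⁅F, v⁆) + σ ⁅F, v⁆ + ⁅F, v⁆ = 0 := by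
  simp only [LieEquiv.map_lie, hF, ← lie_add, hv, lie_zero]

variable [IsKilling ℝ L]

lemma eq_zero_of_killing {x : L} (h : ∀ y, killingForm ℝ L x y = 0) : x = 0 :=
  (IsKilling.killingForm_nondegenerate ℝ L).1 x h

/-- A vector commuting with the fixed points of `σ` has bracket with any `u` of vanishing
`σ`-average. -/
lemma lie_average_eq_zero (hσ3 : ∀ x, σ (σ (σ x)) = x) {v : L}
    (hc : ∀ F, σ F = F → ⁅F, v⁆ = 0) (u : L) :
    ⁅v, u⁆ + σ ⁅v, u⁆ + σ (σ ⁅v, u⁆) = 0 := by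
  apply eq_zero_of_killing
  intro w
  have inv := fun x y => killingForm_of_equiv_apply (R := ℝ) σ x y
  have e1 : killingForm ℝ L (σ ⁅v, u⁆) w = killingForm ℝ L ⁅v, u⁆ (σ (σ w)) := by
    conv_lhs => rw [← hσ3 w]
    exact inv _ _
  have e2 : killingForm ℝ L (σ (σ ⁅v, u⁆)) w = killingForm ℝ L ⁅v, u⁆ (σ w) := by
    conv_lhs => rw [← hσ3 w]
    rw [inv, inv]
  have hF : ⁅w + σ w + σ (σ w), v⁆ = 0 := hc _ (by simp only [map_add, hσ3]; abel)
  have h0 : killingForm ℝ L (w + σ w + σ (σ w)) ⁅v, u⁆ = 0 := by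
    rw [← LieModule.traceForm_apply_lie_apply, hF]; simp
  rw [LieModule.traceForm_comm] at h0
  simp only [map_add, LinearMap.add_apply] at h0 ⊢
  linarith

/-- Twisted commutation: a vector of `ker (σ² + σ + 1)` centralized by the fixed points satisfies
`ad v ∘ σ = σ² ∘ ad v`. -/
lemma lie_map_of_centralizes (hσ3 : ∀ x, σ (σ (σ x)) = x) {v : L}
    (hv : σ (σ v) + σ v + v = 0) (hc : ∀ F, σ F = F → ⁅F, v⁆ = 0) (z : L) :
    ⁅v, σ z⁆ = σ (σ ⁅v, z⁆) := by
  obtain ⟨h, u, hh, hu, rfl⟩ := exists_decomp σ hσ3 z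
  have hvh : ⁅v, h⁆ = 0 := by rw [← lie_skew, hc h hh, neg_zero]
  have hv2 : σ (σ v) = -σ v - v := by linear_combination (norm := module) hv
  have hu2 : σ (σ u) = -σ u - u := by linear_combination (norm := module) hu
  -- the averages of `[v, u]` and `[v, σ u]` give two linear relations among the four brackets
  -- of `v, σ v` with `u, σ u`
  have a := lie_average_eq_zero σ hσ3 hc u
  have b := lie_average_eq_zero σ hσ3 hc (σ u)
  have a' := a
  simp only [LieEquiv.map_lie, hv2, hu2, map_neg, map_sub, lie_sub, sub_lie, lie_neg, neg_lie]
    at a' b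
  have c : (3 : ℝ) • (⁅v, σ u⁆ - ⁅σ v, u⁆) = 0 := by
    linear_combination (norm := module) a' + (2 : ℝ) • b
  have d : ⁅v, σ u⁆ = ⁅σ v, u⁆ := by
    rw [smul_eq_zero_iff_right (by norm_num), sub_eq_zero] at c
    exact c
  have e : (2 : ℝ) • (⁅v, σ u⁆ + ⁅v, u⁆ + ⁅σ v, σ u⁆) = 0 := by
    linear_combination (norm := module) a' + d
  have f : ⁅v, σ u⁆ + ⁅v, u⁆ + ⁅σ v, σ u⁆ = 0 := by
    rwa [smul_eq_zero_iff_right (by norm_num)] at e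
  have g : ⁅v, σ u⁆ = σ (σ ⁅v, u⁆) := by
    rw [LieEquiv.map_lie σ v u] at a ⊢
    linear_combination (norm := module) f - a
  simp only [map_add, lie_add, hh, hvh, g, map_zero]

lemma eq_zero_of_centralizes (hσ3 : ∀ x, σ (σ (σ x)) = x) {v : L}
    (hv : σ (σ v) + σ v + v = 0) (hc : ∀ F, σ F = F → ⁅F, v⁆ = 0) : v = 0 := by
  have tw := lie_map_of_centralizes σ hσ3 hv hc
  have key : ∀ u, σ (σ u) + σ u + u = 0 → killingForm ℝ L v (σ (σ u)) = 0 := by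
    intro u hu
    let S : Module.End ℝ L := (σ : L →ₗ⁅ℝ⁆ L)
    have hSx : ∀ x, S x = σ x := fun _ => rfl
    have ad1 : ∀ x, ad ℝ L (σ x) = S * ad ℝ L x * (S * S) := by
      intro x; ext y
      simp [hSx, LieEquiv.map_lie, hσ3]
    have ad2 : ad ℝ L (σ (σ u)) = S * S * ad ℝ L u * S := by
      ext y
      simp [hSx, LieEquiv.map_lie, hσ3]
    have hcomm : ad ℝ L v * (S * ad ℝ L u * (S * S)) - S * ad ℝ L u * (S * S) * ad ℝ L v
        = S * S * (ad ℝ L v * ad ℝ L u - ad ℝ L u * ad ℝ L v) * S := by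
      rw [← ad1]
      ext y
      have := congrArg (fun x => ⁅x, y⁆) (tw u)
      simp only [LinearMap.sub_apply, Module.End.mul_apply, ad_apply, hSx, map_sub, LieEquiv.map_lie,
        hσ3, lie_lie] at this ⊢
      exact this
    have h := two_mul_trace_eq (A := ad ℝ L v) (B := ad ℝ L u) (S := S)
      (by ext y; simp [hSx, hσ3]) (by ext y; simpa [hSx] using tw y) hcomm
    rw [← ad2, ← ad1] at h
    change 2 * killingForm ℝ L v (σ (σ u)) =
      killingForm ℝ L v u + killingForm ℝ L v (σ u) at h
    have s := congrArg (killingForm ℝ L v) hu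
    simp only [map_add, map_zero] at s
    linarith
  apply eq_zero_of_killing
  intro w
  obtain ⟨h, t, hh, ht, rfl⟩ := exists_decomp σ hσ3 w
  have k1 := key (σ t) (by rw [hσ3]; rw [← ht]; abel)
  rw [hσ3] at k1
  rw [map_add, k1, LieModule.traceForm_comm, killing_fixed_left σ hh hv, add_zero]

end OrderThree

open OrderThree LieAlgebra in
/-- For a semisimple real Lie algebra `𝔤` with an order-3 automorphism `σ ≠ id`,
setting `𝔥 = ker(σ - id)` and `𝕍 = ker(σ² + σ + id)`, one has
`span{[F,v] : F ∈ 𝔥, v ∈ 𝕍} = 𝕍` and `{v ∈ 𝕍 : [𝔥,v] = 0} = 0`. -/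
theorem isotropy_acts_without_fixed_vectors_semisimple
    {L : Type*} [LieRing L] [LieAlgebra ℝ L] [FiniteDimensional ℝ L]
    [LieAlgebra.IsSemisimple ℝ L]
    (σ : L ≃ₗ⁅ℝ⁆ L)
    (hσ3 : ∀ x, σ (σ (σ x)) = x)
    (hσne : ∃ x, σ x ≠ x)
    (H V : Set L)
    (hH : H = {x | σ x = x})
    (hV : V = {x | σ (σ x) + σ x + x = 0}) :
    Submodule.span ℝ {z : L | ∃ F ∈ H, ∃ v ∈ V, z = ⁅F, v⁆} = Submodule.span ℝ V
      ∧ ∀ v ∈ V, (∀ F ∈ H, ⁅F, v⁆ = (0 : L)) → v = 0 := by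
  subst hH hV
  simp only [Set.mem_ofPred_eq]
  refine ⟨le_antisymm ?_ ?_, fun v hv hc => eq_zero_of_centralizes σ hσ3 hv hc⟩
  · apply Submodule.span_mono
    rintro _ ⟨F, hF, v, hv, rfl⟩
    exact map_sq_lie_add σ hF hv
  · set W := Submodule.span ℝ {z : L | ∃ F, σ F = F ∧ ∃ v, σ (σ v) + σ v + v = 0 ∧ z = ⁅F, v⁆}
      with hW
    rw [Submodule.span_le]
    intro x hx
    rw [SetLike.mem_coe, ← LinearMap.BilinForm.orthogonal_orthogonal
      (IsKilling.killingForm_nondegenerate ℝ L) (LieModule.traceForm_isSymm ℝ L L).isRefl W]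
    intro y hy
    obtain ⟨h, t, hh, ht, rfl⟩ := exists_decomp σ hσ3 y
    suffices ht0 : t = 0 by
      subst ht0
      rw [add_zero]
      exact killing_fixed_left σ hh hx
    apply eq_zero_of_centralizes σ hσ3 ht
    intro F hF
    apply eq_zero_of_killing
    intro w
    obtain ⟨k, s, hk, hs, rfl⟩ := exists_decomp σ hσ3 w
    have o : killingForm ℝ L ⁅F, s⁆ (h + t) = 0 :=
      hy _ (Submodule.subset_span ⟨F, hF, s, hs, rfl⟩)
    have o1 := killing_fixed_left σ hh (map_sq_lie_add σ hF hs)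
    have o2 := killing_fixed_left σ hk (map_sq_lie_add σ hF ht)
    rw [LieModule.traceForm_comm] at o1 o2
    rw [map_add, o1, zero_add, LieModule.traceForm_apply_lie_apply', neg_eq_zero,
      LieModule.traceForm_comm] at o
    rw [map_add, o2, zero_add, LieModule.traceForm_apply_lie_apply', neg_eq_zero,
      LieModule.traceForm_comm, LieModule.traceForm_apply_lie_apply',
      LieModule.traceForm_comm, o, neg_zero]
end

section
/- Let 𝔤 be a finite-dimensional real Lie algebra, V ⊆ 𝔤 an abelian Lie ideal, and L ⊆ 𝔤 a semisimple Lie subalgebra with 𝔤 = V ⊕ L as vector spaces. Set V^L := {v ∈ V : [l,v] = 0 for all l ∈ L} and V_⊥ := span{[l,v] : l ∈ L, v ∈ V}. Then the center of 𝔤 equals V^L, and the derived algebra satisfies [𝔤,𝔤] = L ⊕ V_⊥. -/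
/-!
Everything follows from decomposing elements as `v + k` with `v ∈ V`, `k ∈ K`. For `x = v + k`
central and `l ∈ K`, the equation `⁅l, v⁆ + ⁅l, k⁆ = 0` splits along `V ⊕ K`, so `k` is central in
`K` and hence zero, as a semisimple Lie algebra has trivial center. For the derived algebra, expand
`⁅v + k, w + l⁆` and use `⁅v, w⁆ = 0`; the reverse inclusion `K ≤ [𝔤, 𝔤]` holds because a
semisimple Lie algebra is perfect (`lie_top_top_of_isSemisimple`).
-/

/-- A semisimple Lie algebra is perfect: it is the sum of its minimal ideals `I`, and each
satisfies `⁅I, I⁆ = I` by minimality, being non-abelian. -/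
theorem lie_top_top_of_isSemisimple (R K : Type*) [CommRing R] [LieRing K] [LieAlgebra R K]
    [LieAlgebra.IsSemisimple R K] :
    ⁅(⊤ : LieIdeal R K), (⊤ : LieIdeal R K)⁆ = ⊤ := by
  rw [eq_top_iff]
  conv_lhs => rw [← LieAlgebra.IsSemisimple.sSup_atoms_eq_top (R := R) (L := K)]
  refine sSup_le fun I hI => ?_
  have hle : ⁅I, I⁆ ≤ I := LieSubmodule.lie_le_right I I
  rcases hI.le_iff.mp hle with h | h
  · exact absurd ((LieSubmodule.lie_abelian_iff_lie_self_eq_bot I).mpr h)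
      (LieAlgebra.IsSemisimple.non_abelian_of_isAtom I hI)
  · rw [← h]
    exact LieSubmodule.mono_lie le_top le_top

/-- For a semidirect product `𝔤 = V ⋊ L` with `V` an abelian ideal and `L` a semisimple
subalgebra complementary to `V`: the center of `𝔤` equals the set of `L`-fixed vectors
`V^L`, and the derived algebra satisfies `[𝔤,𝔤] = L ⊕ V_⊥` where
`V_⊥ = span{[l,v] : l ∈ L, v ∈ V}`. -/
theorem center_and_derived_of_semidirect
    {L : Type*} [LieRing L] [LieAlgebra ℝ L] [FiniteDimensional ℝ L]
    (V : LieIdeal ℝ L)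
    (habl : ∀ x ∈ V, ∀ y ∈ V, ⁅x, y⁆ = (0 : L))
    (K : LieSubalgebra ℝ L) [LieAlgebra.IsSemisimple ℝ K]
    (hcompl : IsCompl V.toSubmodule K.toSubmodule) :
    (∀ x : L, x ∈ LieAlgebra.center ℝ L ↔ (x ∈ V ∧ ∀ l ∈ K, ⁅l, x⁆ = (0 : L)))
      ∧ (LieAlgebra.derivedSeries ℝ L 1).toSubmodule
          = K.toSubmodule ⊔ Submodule.span ℝ {z : L | ∃ l ∈ K, ∃ v ∈ V, z = ⁅l, v⁆} := by
  have dec : ∀ x : L, ∃ v ∈ V, ∃ k ∈ K, v + k = x := fun x =>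
    Submodule.mem_sup.mp (hcompl.sup_eq_top ▸ Submodule.mem_top : x ∈ V.toSubmodule ⊔ K.toSubmodule)
  have hcenter : LieAlgebra.center ℝ K = ⊥ := LieAlgebra.center_eq_bot ℝ K
  refine ⟨fun x => ⟨fun hx => ?_, ?_⟩, le_antisymm ?_ (sup_le ?_ ?_)⟩
  · rw [LieModule.mem_maxTrivSubmodule] at hx
    obtain ⟨v, hv, k, hk, rfl⟩ := dec x
    have hk0 : (⟨k, hk⟩ : K) ∈ LieAlgebra.center ℝ K := by
      rw [LieModule.mem_maxTrivSubmodule]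
      rintro ⟨l, hl⟩
      apply Subtype.ext
      change ⁅l, k⁆ = 0
      -- `⁅l, k⁆ = -⁅l, v⁆` lies in `V ∩ K`.
      have h := hx l
      rw [lie_add] at h
      refine Submodule.disjoint_def.mp hcompl.disjoint _ ?_ (K.lie_mem hl hk)
      rw [eq_neg_of_add_eq_zero_right h]
      exact V.toSubmodule.neg_mem (V.lie_mem hv)
    rw [hcenter, LieSubmodule.mem_bot] at hk0
    obtain rfl : k = 0 := congrArg Subtype.val hk0
    rw [add_zero] at hx ⊢
    exact ⟨hv, fun l _ => hx l⟩
  · rintro ⟨hxV, hxK⟩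
    rw [LieModule.mem_maxTrivSubmodule]
    intro y
    obtain ⟨v, hv, k, hk, rfl⟩ := dec y
    rw [add_lie, habl v hv x hxV, hxK k hk, add_zero]
  · rw [LieAlgebra.derivedSeries_def, LieAlgebra.derivedSeriesOfIdeal_succ,
      LieAlgebra.derivedSeriesOfIdeal_zero, LieSubmodule.lieIdeal_oper_eq_linear_span',
      Submodule.span_le]
    rintro _ ⟨x, -, y, -, rfl⟩
    obtain ⟨v, hv, k, hk, rfl⟩ := dec x
    obtain ⟨w, hw, l, hl, rfl⟩ := dec y
    rw [add_lie, lie_add, lie_add, habl v hv w hw, zero_add, ← lie_skew v l]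
    refine add_mem (neg_mem (Submodule.mem_sup_right (Submodule.subset_span ⟨l, hl, v, hv, rfl⟩)))
      (add_mem (Submodule.mem_sup_right (Submodule.subset_span ⟨k, hk, w, hw, rfl⟩))
        (Submodule.mem_sup_left (K.lie_mem hk hl)))
  · intro k hk
    have h : (⟨k, hk⟩ : K) ∈ (⁅(⊤ : LieIdeal ℝ K), (⊤ : LieIdeal ℝ K)⁆).toSubmodule := by
      rw [lie_top_top_of_isSemisimple]
      exact Submodule.mem_top
    rw [LieSubmodule.lieIdeal_oper_eq_linear_span'] at h
    have h' := Submodule.mem_map_of_mem (f := K.toSubmodule.subtype) h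
    rw [Submodule.map_span] at h'
    refine Submodule.span_le.mpr ?_ h'
    rintro _ ⟨_, ⟨x, -, y, -, rfl⟩, rfl⟩
    exact LieSubmodule.lie_mem_lie (LieSubmodule.mem_top (x : L)) (LieSubmodule.mem_top (y : L))
  · rw [Submodule.span_le]
    rintro _ ⟨l, -, v, -, rfl⟩
    exact LieSubmodule.lie_mem_lie (LieSubmodule.mem_top l) (LieSubmodule.mem_top v)
end

section
/- Let 𝔤 be a finite-dimensional real Lie algebra, V ⊆ 𝔤 an abelian Lie ideal, and L ⊆ 𝔤 a semisimple Lie subalgebra with 𝔤 = V ⊕ L as vector spaces. Then every derivation ζ of 𝔤 satisfies ζ(V) ⊆ V, and there exist l₀ ∈ L, v₀ ∈ V_⊥ := span{[l,v] : l ∈ L, v ∈ V}, and a linear map g : V → V satisfying g([l,v]) = [l, g(v)] for all l ∈ L, v ∈ V (g lies in the centralizer of the L-action on V), such that ζ(v) = [l₀, v] + g(v) for all v ∈ V and ζ(l) = [l₀, l] + [l, v₀] for all l ∈ L. Moreover l₀ and v₀ are uniquely determined by ζ. -/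
/-!
The projection `q` onto `K` along the abelian ideal `V` is a homomorphism. For a derivation `ζ`,
the subspace `q (ζ V)` is an ideal of `K`, and applying `q ∘ ζ ∘ ζ` to `⁅v, w⁆ = 0` shows that it is
abelian; as `K` is semisimple it vanishes, so `ζ` preserves `V`. The `K`-component of `ζ` on `K` is
a derivation of `K`, hence inner, which gives `l₀`. The `V`-component of `ζ` on `K` is a cocycle with
values in the `K`-module `V`, so by Whitehead's first lemma it is `l ↦ ⁅l, v₀⁆`, with `v₀` in the
span of the `⁅l, v⁆`. Finally `g = ζ - ad l₀` commutes with `K` on `V` by the Leibniz rule.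
Uniqueness holds because `K` has trivial centre and because an invariant vector in the span of the
`⁅l, v⁆` is zero.

The two facts on modules, `exists_eq_lie_of_isCocycle` and `eq_zero_of_mem_span_of_lie_eq_zero`, are
proved together for a finite-dimensional module `M` over a Lie algebra `K` with nondegenerate
Killing form in characteristic zero, without Weyl's theorem. The Casimir operator of an invariant
tensor in `K ⊗ K` is a `K`-endomorphism that kills invariants, has its image in the span of the
`⁅x, m⁆`, and turns cocycles into coboundaries; operators with these properties (`IsGood`) are
stable under sums and under composition with `K`-endomorphisms. When `K` acts nontrivially on the
kernel of a good idempotent, Cartan's criterion says that the trace form of this kernel is nonzero,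
and `exists_invariant_tensor` supplies a Casimir operator with nonzero trace there; an idempotent
polynomial in it enlarges the given idempotent (`IsGood.exists_ker_lt`). At the end there is a good
operator `E` with `⁅x, E m⁆ = ⁅x, m⁆` for all `x` and `m`, from which both facts are immediate.
-/

namespace SemidirectDerivation

open Polynomial TensorProduct LieModule

/-! ### Idempotent polynomials of an endomorphism -/

section LinearAlgebra

variable {k : Type*} [Field k] {M : Type*} [AddCommGroup M] [Module k M]

/-- If `D` is not nilpotent, the projection onto the largest subspace on which `D` is invertible
(along the generalised kernel of `D`) is a polynomial in `D` divisible by `D`. It comes from a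
Bézout identity between `X ^ (r + 1)` and `q`, where the minimal polynomial of `D` is `X ^ r * q`
with `q` coprime to `X`. -/
lemma exists_idempotent_of_not_isNilpotent [FiniteDimensional k M] (D : Module.End k M)
    (hD : ¬ IsNilpotent D) :
    ∃ p : k[X], IsIdempotentElem (aeval D p * D) ∧ aeval D p * D ≠ 0 := by
  have hm : minpoly k D ≠ 0 := minpoly.ne_zero (Algebra.IsIntegral.isIntegral D)
  obtain ⟨q, hq, hndvd⟩ := Polynomial.exists_eq_pow_rootMultiplicity_mul_and_not_dvd _ hm (0 : k)
  set r := (minpoly k D).rootMultiplicity 0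
  rw [C_0, sub_zero] at hq hndvd
  obtain ⟨a, b, hab⟩ : IsCoprime (X ^ (r + 1)) q :=
    IsCoprime.pow_left (Polynomial.irreducible_X.coprime_iff_not_dvd.mpr hndvd)
  have hXq : D ^ r * aeval D q = 0 := by
    have := minpoly.aeval k D
    rw [hq] at this
    simpa using this
  have hF : aeval D (a * X ^ r) * D = aeval D (a * X ^ (r + 1)) := by
    simp [pow_succ, mul_assoc]
  have hsum : aeval D (a * X ^ (r + 1)) + aeval D (b * q) = 1 := by
    rw [← map_add, hab, map_one]
  have hprod : aeval D (a * X ^ (r + 1)) * aeval D (b * q) = 0 := by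
    rw [← map_mul, show a * X ^ (r + 1) * (b * q) = a * b * X * (X ^ r * q) by ring, map_mul,
      map_mul (aeval D) (X ^ r) q, map_pow, aeval_X, hXq, mul_zero]
  refine ⟨a * X ^ r, ?_, ?_⟩
  · rw [hF, IsIdempotentElem]
    rw [← eq_sub_iff_add_eq'] at hsum
    rw [hsum, mul_sub, mul_one, sub_eq_zero] at hprod
    exact hprod.symm
  · intro h0
    rw [← hF, h0, zero_add] at hsum
    refine hD ⟨r, ?_⟩
    rw [← mul_one (D ^ r), ← hsum, mul_comm b q, map_mul, ← mul_assoc, hXq, zero_mul]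

lemma commute_aeval {D S : Module.End k M} (h : Commute S D) (p : k[X]) :
    Commute S (aeval D p) :=
  (Algebra.commute_of_mem_adjoin_singleton_of_commute
    (aeval_mem_adjoin_singleton k D) h)

end LinearAlgebra

/-! ### Perfectness and Cartan's criterion -/

section Perfect

variable (k : Type*) [Field k] (K : Type*) [LieRing K] [LieAlgebra k K]
  [FiniteDimensional k K] [LieAlgebra.IsKilling k K]

/-- A Lie algebra with nondegenerate Killing form is perfect: what is orthogonal to all brackets is
central. -/
lemma span_lie_eq_top : Submodule.span k {z : K | ∃ x y : K, ⁅x, y⁆ = z} = ⊤ := by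
  set S := Submodule.span k {z : K | ∃ x y : K, ⁅x, y⁆ = z}
  have hperp : (killingForm k K).orthogonal S = ⊥ := by
    rw [eq_bot_iff]
    intro x hx
    have hcen : x ∈ LieAlgebra.center k K := by
      intro y
      refine (LieAlgebra.IsKilling.killingForm_nondegenerate k K).1 _ fun z ↦ ?_
      have := hx _ (Submodule.subset_span ⟨y, z, rfl⟩)
      rw [traceForm_apply_lie_apply', traceForm_comm, this, neg_zero]
    simpa using hcen
  have h2 := LinearMap.BilinForm.orthogonal_orthogonal
    (LieAlgebra.IsKilling.killingForm_nondegenerate k K) (traceForm_isSymm k K K).isRefl S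
  rw [← h2, hperp]
  ext; simp

/-- For perfect `K` the lower central series of a module is constant from its second term on, so
that a nilpotent module is trivial. -/
lemma lie_eq_zero_of_isNilpotent {M : Type*} [AddCommGroup M] [Module k M] [LieRingModule K M]
    [LieModule k K M] [IsNilpotent K M] (x : K) (m : M) : ⁅x, m⁆ = 0 := by
  have mem (N : LieSubmodule k K M) (y : K) (n : M) (hn : n ∈ N) :
      ⁅y, n⁆ ∈ ⁅(⊤ : LieIdeal k K), N⁆ := LieSubmodule.lie_mem_lie (LieSubmodule.mem_top y) hn
  have hle : lowerCentralSeries k K M 1 ≤ lowerCentralSeries k K M 2 := by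
    rw [lowerCentralSeries_succ, LieSubmodule.lie_le_iff]
    intro x _ m _
    have hx : x ∈ Submodule.span k {z : K | ∃ x y : K, ⁅x, y⁆ = z} := by simp [span_lie_eq_top]
    induction hx using Submodule.span_induction with
    | mem z hz =>
      obtain ⟨a, b, rfl⟩ := hz
      rw [lie_lie]
      exact sub_mem (mem _ a _ (mem _ b m trivial)) (mem _ b _ (mem _ a m trivial))
    | zero => simp
    | add a b _ _ ha hb => rw [add_lie]; exact add_mem (ha trivial) (hb trivial)
    | smul c a _ ha => rw [smul_lie]; exact Submodule.smul_mem _ c (ha trivial)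
  have hall (n : ℕ) : lowerCentralSeries k K M 1 ≤ lowerCentralSeries k K M (n + 1) := by
    induction n with
    | zero => exact le_rfl
    | succ n ih =>
      refine hle.trans ?_
      rw [lowerCentralSeries_succ, lowerCentralSeries_succ k K M (n + 1)]
      exact LieSubmodule.mono_lie_right _ ih
  obtain ⟨n, hn⟩ := IsNilpotent.nilpotent k K M
  have h1 : ⁅x, m⁆ ∈ lowerCentralSeries k K M (n + 1) := hall n (mem _ x m trivial)
  have h2 := antitone_lowerCentralSeries k K M n.le_succ h1
  simpa [hn] using h2

/-- By Cartan's criterion a vanishing trace form makes `M` a nilpotent module over the derived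
algebra, which is all of `K`. -/
lemma lie_eq_zero_of_traceForm_eq_zero [CharZero k] {M : Type*} [AddCommGroup M] [Module k M]
    [FiniteDimensional k M] [LieRingModule K M] [LieModule k K M]
    (h : traceForm k K M = 0) (x : K) (m : M) : ⁅x, m⁆ = 0 := by
  have hder (x : K) : x ∈ LieAlgebra.derivedSeries k K 1 := by
    have hx : x ∈ Submodule.span k {z : K | ∃ x y : K, ⁅x, y⁆ = z} := by simp [span_lie_eq_top]
    refine Submodule.span_le (p := (LieAlgebra.derivedSeries k K 1).toSubmodule).mpr ?_ hx
    rintro _ ⟨a, b, rfl⟩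
    exact LieSubmodule.lie_mem_lie (LieSubmodule.mem_top a) (LieSubmodule.mem_top b)
  have hnil := isNilpotent_derivedSeries_of_traceForm_eq_zero h
  have : IsNilpotent K M := by
    rw [isNilpotent_iff_forall' (R := k)] at hnil ⊢
    exact fun x ↦ hnil ⟨x, hder x⟩
  exact lie_eq_zero_of_isNilpotent k K x m

end Perfect

/-! ### Invariant tensors from invariant forms -/

section Centroid

variable {k : Type*} [Field k] {K : Type*} [LieRing K] [LieAlgebra k K]
  [FiniteDimensional k K] [LieAlgebra.IsKilling k K]

/-- An element `T` of the centroid with `T ^ 2 = 0` vanishes, because its range is an abelian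
ideal. -/
lemma eq_zero_of_sq_eq_zero (T : Module.End k K) (hT : ∀ x y : K, T ⁅x, y⁆ = ⁅x, T y⁆)
    (h : T ^ 2 = 0) : T = 0 := by
  have hT' (x y : K) : T ⁅x, y⁆ = ⁅T x, y⁆ := by
    rw [← lie_skew, map_neg, hT, lie_skew]
  let I : LieIdeal k K :=
    { LinearMap.range T with
      lie_mem := by
        rintro x _ ⟨y, rfl⟩
        exact ⟨⁅x, y⁆, hT x y⟩ }
  have hI : IsLieAbelian I := by
    refine ⟨?_⟩
    rintro ⟨_, x, rfl⟩ ⟨_, y, rfl⟩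
    apply Subtype.ext
    change ⁅T x, T y⁆ = 0
    rw [← hT, ← hT', ← Module.End.mul_apply, ← sq, h, LinearMap.zero_apply]
  have hbot := LieAlgebra.IsKilling.ideal_eq_bot_of_isLieAbelian I
  ext x
  have : T x ∈ I := ⟨x, rfl⟩
  simpa [hbot] using this

lemma eq_zero_of_isNilpotent (T : Module.End k K) (hT : ∀ x y : K, T ⁅x, y⁆ = ⁅x, T y⁆)
    (h : _root_.IsNilpotent T) : T = 0 := by
  have hpow (n : ℕ) : ∀ x y : K, (T ^ n) ⁅x, y⁆ = ⁅x, (T ^ n) y⁆ := by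
    induction n with
    | zero => simp
    | succ n ih => intro x y; rw [pow_succ', Module.End.mul_apply, ih, hT, Module.End.mul_apply]
  have key (n : ℕ) : T ^ 2 ^ n = 0 → T = 0 := by
    induction n with
    | zero => simp
    | succ n ih =>
      intro h
      rw [pow_succ, pow_mul] at h
      exact ih (eq_zero_of_sq_eq_zero _ (hpow _) h)
  obtain ⟨n, hn⟩ := h
  exact key n (pow_eq_zero_of_le Nat.lt_two_pow_self.le hn)

/-- A nonzero invariant symmetric form `B` on `K` pairs nontrivially with some invariant tensor. When
`B` is nondegenerate its inverse would do; in general, identify `K ⊗ K` with `End K` through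
the Killing form `κ` and write `B = κ (A ·, ·)` with `A` in the centroid. Pairing with `B` becomes
`T ↦ trace (A * T)`, and `A` is not nilpotent, so some polynomial `T = p(A)` makes `A * T` a
nonzero idempotent, whose trace is nonzero in characteristic zero. -/
lemma exists_invariant_tensor [CharZero k] (B : LinearMap.BilinForm k K)
    (hsymm : ∀ x y, B x y = B y x) (hinv : ∀ x y z : K, B ⁅x, y⁆ z = -B y ⁅x, z⁆) (hB : B ≠ 0) :
    ∃ t : K ⊗[k] K, (∀ x : K, ⁅x, t⁆ = 0) ∧ TensorProduct.lift B t ≠ 0 := by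
  have hnd := LieAlgebra.IsKilling.killingForm_nondegenerate k K
  let κ : K ≃ₗ[k] Module.Dual k K := (killingForm k K).toDual hnd
  have hκ (x y : K) : κ x y = killingForm k K x y := rfl
  let e : K ⊗[k] K ≃ₗ[k] Module.End k K :=
    (TensorProduct.congr κ (LinearEquiv.refl k K)) ≪≫ₗ
      LinearEquiv.ofBijective (dualTensorHom k K K) (dualTensorHom_bijective ..)
  have he (b a x : K) : e (b ⊗ₜ a) x = killingForm k K b x • a := rfl
  have he_lie (x y : K) (t : K ⊗[k] K) : e ⁅x, t⁆ y = ⁅x, e t y⁆ - e t ⁅x, y⁆ := by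
    induction t using TensorProduct.induction_on with
    | zero => simp
    | tmul b a =>
      rw [TensorProduct.LieModule.lie_tmul_right, map_add, LinearMap.add_apply, he, he, he, he,
        traceForm_apply_lie_apply', lie_smul, neg_smul]
      abel
    | add s t hs ht =>
      rw [lie_add, map_add, LinearMap.add_apply, hs, ht, map_add, LinearMap.add_apply,
        LinearMap.add_apply, lie_add]
      abel
  let A : Module.End k K := κ.symm.toLinearMap ∘ₗ B
  have hA (x y : K) : killingForm k K (A x) y = B x y := by
    rw [← hκ]; simp [A]
  have hAlie (x y : K) : A ⁅x, y⁆ = ⁅x, A y⁆ := by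
    apply κ.injective
    ext z
    rw [hκ, hκ, hA, hinv, traceForm_apply_lie_apply', hA]
  have htrace (t : K ⊗[k] K) : TensorProduct.lift B t = LinearMap.trace k K (A * e t) := by
    induction t using TensorProduct.induction_on with
    | zero => simp
    | tmul b a =>
      have : A * e (b ⊗ₜ a) = (killingForm k K b).smulRight (A a) := by
        ext x; simp [he]
      rw [this, LinearMap.trace_smulRight, traceForm_comm, hA, hsymm, TensorProduct.lift.tmul]
    | add s t hs ht => rw [map_add, hs, ht, map_add, mul_add, map_add]
  have hAnil : ¬ _root_.IsNilpotent A := fun h ↦ hB <| by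
    ext x y
    rw [← hA, eq_zero_of_isNilpotent A hAlie h]
    simp
  obtain ⟨p, hidem, hne⟩ := exists_idempotent_of_not_isNilpotent A hAnil
  refine ⟨e.symm (aeval A p), fun x ↦ ?_, ?_⟩
  · apply e.injective
    have hcomm : Commute (toEnd k K K x) (aeval A p) :=
      commute_aeval (LinearMap.ext fun y ↦ (hAlie x y).symm) p
    ext y
    rw [he_lie, LinearEquiv.apply_symm_apply, map_zero, LinearMap.zero_apply, sub_eq_zero]
    exact LinearMap.congr_fun hcomm y
  · rw [htrace, LinearEquiv.apply_symm_apply, (commute_aeval (Commute.refl A) p).eq]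
    exact fun h ↦ hne ((LinearMap.IsIdempotentElem.trace_eq_zero_iff hidem).mp h)

end Centroid

/-! ### Cocycles and good operators -/

section Good

variable {k : Type*} [Field k] {K : Type*} [LieRing K] [LieAlgebra k K]
  {M : Type*} [AddCommGroup M] [Module k M] [LieRingModule K M]

/-- A linear map `c : K → M` is a cocycle (of degree one, for Lie algebra cohomology with
coefficients in `M`). The coboundaries are the maps `x ↦ ⁅x, m⁆` for `m : M`. -/
def IsCocycle (c : K →ₗ[k] M) : Prop := ∀ x y : K, c ⁅x, y⁆ = ⁅x, c y⁆ - ⁅y, c x⁆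

/-- A `K`-endomorphism `C` of `M` is good if it behaves as though it factored through the sum of
the nontrivial simple constituents of `M`: it kills the invariants, takes values in the span of
the `⁅x, n⁆`, and turns every cocycle into a coboundary. -/
structure IsGood (C : Module.End k M) : Prop where
  comm : ∀ (x : K) (m : M), C ⁅x, m⁆ = ⁅x, C m⁆
  inv : ∀ m : M, (∀ x : K, ⁅x, m⁆ = 0) → C m = 0
  mem_span : ∀ m : M, C m ∈ Submodule.span k {z : M | ∃ (x : K) (n : M), ⁅x, n⁆ = z}
  cocycle : ∀ c : K →ₗ[k] M, IsCocycle c → ∃ m : M, ∀ x : K, C (c x) = ⁅x, m⁆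

lemma isGood_zero : IsGood (K := K) (0 : Module.End k M) where
  comm := by simp
  inv := by simp
  mem_span := by simp
  cocycle := fun c _ ↦ ⟨0, by simp⟩

lemma IsGood.add {C D : Module.End k M} (hC : IsGood (K := K) C) (hD : IsGood (K := K) D) :
    IsGood (K := K) (C + D) where
  comm x m := by simp [hC.comm, hD.comm]
  inv m hm := by simp [hC.inv m hm, hD.inv m hm]
  mem_span m := add_mem (hC.mem_span m) (hD.mem_span m)
  cocycle c hc := by
    obtain ⟨m, hm⟩ := hC.cocycle c hc
    obtain ⟨n, hn⟩ := hD.cocycle c hc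
    exact ⟨m + n, fun x ↦ by simp [hm, hn]⟩

lemma IsGood.mul_left {C S : Module.End k M} (hC : IsGood (K := K) C)
    (hS : ∀ (x : K) (m : M), S ⁅x, m⁆ = ⁅x, S m⁆) : IsGood (K := K) (S * C) where
  comm x m := by simp [hC.comm, hS]
  inv m hm := by simp [hC.inv m hm]
  mem_span m := by
    have h := Submodule.mem_map_of_mem (f := S) (hC.mem_span m)
    rw [Submodule.map_span] at h
    refine Submodule.span_mono ?_ h
    rintro _ ⟨_, ⟨x, n, rfl⟩, rfl⟩
    exact ⟨x, S n, (hS x n).symm⟩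
  cocycle c hc := by
    obtain ⟨m, hm⟩ := hC.cocycle c hc
    exact ⟨S m, fun x ↦ by simp [hm, hS]⟩

end Good

/-! ### Casimir operators of invariant tensors -/

section Casimir

variable {k : Type*} [Field k] {K : Type*} [LieRing K] [LieAlgebra k K]
  {M : Type*} [AddCommGroup M] [Module k M] [LieRingModule K M] [LieModule k K M]

variable (k K M) in
/-- The operator `m ↦ ∑ ⁅aᵢ, ⁅bᵢ, m⁆⁆` on `M` attached to the tensor `∑ aᵢ ⊗ bᵢ`. -/
noncomputable def casimir : K ⊗[k] K →ₗ[k] Module.End k M :=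
  TensorProduct.lift ((LinearMap.mul k (Module.End k M)).compl₁₂
    (toEnd k K M : K →ₗ[k] Module.End k M) (toEnd k K M : K →ₗ[k] Module.End k M))

lemma casimir_tmul (a b : K) (m : M) : casimir k K M (a ⊗ₜ b) m = ⁅a, ⁅b, m⁆⁆ := rfl

/-- The trace of the operator attached to `t` is the value at `t` of the trace form of `M`. -/
lemma trace_casimir (t : K ⊗[k] K) :
    LinearMap.trace k M (casimir k K M t) = TensorProduct.lift (traceForm k K M) t := by
  induction t using TensorProduct.induction_on with
  | zero => simp
  | tmul a b => rfl
  | add s t hs ht => rw [map_add, map_add, hs, ht, map_add]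

lemma coe_casimir (W : LieSubmodule k K M) (t : K ⊗[k] K) (w : W) :
    (casimir k K W t w : M) = casimir k K M t w := by
  induction t using TensorProduct.induction_on with
  | zero => simp
  | tmul a b => rfl
  | add s t hs ht => simp [hs, ht]

/-- `casimir` is `K`-equivariant; for an invariant `t` this says that the operator of `t` commutes
with `K`. -/
lemma casimir_lie (x : K) (t : K ⊗[k] K) (m : M) :
    casimir k K M ⁅x, t⁆ m = ⁅x, casimir k K M t m⁆ - casimir k K M t ⁅x, m⁆ := by
  induction t using TensorProduct.induction_on with
  | zero => simp
  | tmul a b =>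
    rw [TensorProduct.LieModule.lie_tmul_right, map_add, LinearMap.add_apply, casimir_tmul,
      casimir_tmul, casimir_tmul, casimir_tmul, lie_lie, lie_lie, lie_sub]
    abel
  | add s t hs ht =>
    rw [lie_add, map_add, LinearMap.add_apply, hs, ht, map_add, LinearMap.add_apply,
      LinearMap.add_apply, lie_add]
    abel

/-- For `t = ∑ aᵢ ⊗ bᵢ` and `m = ∑ ⁅aᵢ, c bᵢ⁆`, the difference between `⁅x, m⁆` and
`casimir k K M t (c x)` depends only on `⁅x, t⁆`. So if `t` is invariant, its operator turns the
cocycle `c` into the coboundary of `m`. -/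
lemma casimir_cocycle {c : K →ₗ[k] M} (hc : IsCocycle c) (x : K) (t : K ⊗[k] K) :
    ⁅x, TensorProduct.lift
        ((toEnd k K M : K →ₗ[k] Module.End k M).compl₂ c) t⁆ =
      casimir k K M t (c x) + TensorProduct.lift
        ((toEnd k K M : K →ₗ[k] Module.End k M).compl₂ c) ⁅x, t⁆ := by
  induction t using TensorProduct.induction_on with
  | zero => simp
  | tmul a b =>
    rw [TensorProduct.LieModule.lie_tmul_right, map_add, casimir_tmul]
    simp only [TensorProduct.lift.tmul, LinearMap.compl₂_apply, LieHom.coe_toLinearMap,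
      toEnd_apply_apply, hc x b, lie_sub, lie_lie]
    abel
  | add s t hs ht =>
    rw [map_add, lie_add, hs, ht, map_add, LinearMap.add_apply, lie_add, map_add]
    abel

lemma isGood_casimir {t : K ⊗[k] K} (ht : ∀ x : K, ⁅x, t⁆ = 0) :
    IsGood (K := K) (casimir k K M t) where
  comm x m := by
    have := casimir_lie x t m
    rw [ht, map_zero, LinearMap.zero_apply] at this
    exact (sub_eq_zero.mp this.symm).symm
  inv m hm := by
    clear ht
    induction t using TensorProduct.induction_on with
    | zero => simp
    | tmul a b => rw [casimir_tmul, hm, lie_zero]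
    | add s t hs ht => rw [map_add, LinearMap.add_apply, hs, ht, add_zero]
  mem_span m := by
    clear ht
    induction t using TensorProduct.induction_on with
    | zero => simp
    | tmul a b => exact Submodule.subset_span ⟨a, ⁅b, m⁆, rfl⟩
    | add s t hs ht => rw [map_add, LinearMap.add_apply]; exact add_mem hs ht
  cocycle c hc := ⟨_, fun x ↦ by rw [casimir_cocycle hc, ht, map_zero, add_zero]⟩

lemma commute_casimir {S : Module.End k M} (hS : ∀ (x : K) (m : M), S ⁅x, m⁆ = ⁅x, S m⁆)
    (t : K ⊗[k] K) : Commute S (casimir k K M t) := by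
  ext m
  change S (casimir k K M t m) = casimir k K M t (S m)
  induction t using TensorProduct.induction_on with
  | zero => simp
  | tmul a b => rw [casimir_tmul, casimir_tmul, hS, hS]
  | add s t hs ht => rw [map_add, LinearMap.add_apply, map_add, hs, ht, LinearMap.add_apply]

end Casimir

/-! ### Whitehead's first lemma -/

section Whitehead

variable {k : Type*} [Field k] [CharZero k] {K : Type*} [LieRing K] [LieAlgebra k K]
  [FiniteDimensional k K] [LieAlgebra.IsKilling k K]
  {M : Type*} [AddCommGroup M] [Module k M] [FiniteDimensional k M]
  [LieRingModule K M] [LieModule k K M]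

/-- As long as `K` acts nontrivially on the kernel `W` of a good idempotent `E`, there is a good
idempotent with smaller kernel. By Cartan's criterion the trace form of `W` is nonzero, so some
invariant tensor has a Casimir operator `C` with nonzero trace on `W`. Then `(1 - E) * C` is not
nilpotent, and a nonzero idempotent polynomial in it, without constant term, can be added to
`E`. -/
lemma IsGood.exists_ker_lt {E : Module.End k M} (hE : IsGood (K := K) E)
    (hid : IsIdempotentElem E) {x₀ : K} {m₀ : M} (hm₀ : E m₀ = 0) (hx₀ : ⁅x₀, m₀⁆ ≠ 0) :
    ∃ E' : Module.End k M, IsGood (K := K) E' ∧ IsIdempotentElem E' ∧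
      LinearMap.ker E' < LinearMap.ker E := by
  let W : LieSubmodule k K M :=
    { LinearMap.ker E with
      lie_mem := by
        intro x m hm
        change E m = 0 at hm
        change E ⁅x, m⁆ = 0
        rw [hE.comm, hm, lie_zero] }
  have hW (w : W) : E w = 0 := w.2
  have hform : traceForm k K W ≠ 0 := fun h ↦ hx₀ <|
    congrArg Subtype.val (lie_eq_zero_of_traceForm_eq_zero k K h x₀ (⟨m₀, hm₀⟩ : W))
  obtain ⟨t, ht, htr⟩ := exists_invariant_tensor (traceForm k K W) (traceForm_comm k K W)
    (traceForm_apply_lie_apply' k K W) hform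
  set C := casimir k K M t
  have hC : IsGood (K := K) C := isGood_casimir ht
  have hEC : Commute E C := commute_casimir hE.comm t
  -- `D` agrees with `C` on `W` and is orthogonal to `E`
  set D := (1 - E) * C with hDdef
  have hD : IsGood (K := K) D := hC.mul_left fun x m ↦ by simp [hE.comm]
  have hED : E * D = 0 := by rw [hDdef, ← mul_assoc, mul_sub, mul_one, hid.eq, sub_self, zero_mul]
  have hDE : D * E = 0 := by
    rw [hDdef, mul_assoc, ← hEC.eq, ← mul_assoc, sub_mul, one_mul, hid.eq, sub_self, zero_mul]
  have hDW (n : ℕ) (w : W) : (((casimir k K W t) ^ n) w : M) = (D ^ n) w := by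
    induction n with
    | zero => simp
    | succ n ih =>
      rw [pow_succ', pow_succ', Module.End.mul_apply, Module.End.mul_apply, ← ih, coe_casimir,
        hDdef, Module.End.mul_apply, LinearMap.sub_apply, Module.End.one_apply,
        ← Module.End.mul_apply E C, hEC.eq, Module.End.mul_apply, hW, map_zero, sub_zero]
  have hDnil : ¬ _root_.IsNilpotent D := by
    rintro ⟨n, hn⟩
    have hnil : _root_.IsNilpotent (casimir k K W t) :=
      ⟨n, LinearMap.ext fun w ↦ Subtype.ext <| by rw [hDW, hn]; rfl⟩
    apply htr
    rw [← trace_casimir]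
    exact (LinearMap.isNilpotent_trace_of_isNilpotent hnil).eq_zero
  obtain ⟨p, hF, hF0⟩ := exists_idempotent_of_not_isNilpotent D hDnil
  set F := aeval D p * D with hFdef
  have hFgood : IsGood (K := K) F := hD.mul_left fun x m ↦ by
    have : Commute (toEnd k K M x) (aeval D p) :=
      commute_aeval (LinearMap.ext fun y ↦ (hD.comm x y).symm) p
    exact (LinearMap.congr_fun this m).symm
  have hFE : F * E = 0 := by rw [hFdef, mul_assoc, hDE, mul_zero]
  have hEF : E * F = 0 := by
    rw [hFdef, ← (commute_aeval (Commute.refl D) p).eq, ← mul_assoc, hED, zero_mul]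
  refine ⟨E + F, hE.add hFgood, ?_, ?_⟩
  · rw [IsIdempotentElem, add_mul, mul_add, mul_add, hFE, hEF, hid.eq, hF.eq, add_zero, zero_add]
  · have hEEF : E * (E + F) = E := by rw [mul_add, hid.eq, hEF, add_zero]
    refine lt_of_le_of_ne (fun m hm ↦ ?_) fun heq ↦ hF0 ?_
    · rw [LinearMap.mem_ker] at hm ⊢
      rw [← hEEF, Module.End.mul_apply, hm, map_zero]
    · ext m
      have h1 : F m ∈ LinearMap.ker E := by
        rw [LinearMap.mem_ker, ← Module.End.mul_apply, hEF, LinearMap.zero_apply]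
      rw [← heq, LinearMap.mem_ker, ← Module.End.mul_apply, add_mul, hEF, hF.eq, zero_add] at h1
      exact h1

variable (k K M) in
/-- Enlarging good idempotents until `K` acts trivially on the kernel gives a good `E` such that
`m - E m` is invariant for all `m`. This serves as the projection onto the nontrivial isotypic part
of `M`. -/
lemma exists_isGood_lie_eq :
    ∃ E : Module.End k M, IsGood (K := K) E ∧ ∀ (x : K) (m : M), ⁅x, E m⁆ = ⁅x, m⁆ := by
  suffices ∀ (N : Submodule k M) (E : Module.End k M), LinearMap.ker E = N → IsGood (K := K) E →
      IsIdempotentElem E →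
      ∃ E : Module.End k M, IsGood (K := K) E ∧ ∀ (x : K) (m : M), ⁅x, E m⁆ = ⁅x, m⁆ from
    this _ 0 rfl isGood_zero IsIdempotentElem.zero
  intro N
  induction N using WellFoundedLT.induction with
  | ind N ih =>
    intro E hN hE hid
    by_cases h : ∀ (x : K) (m : M), E m = 0 → ⁅x, m⁆ = 0
    · refine ⟨E, hE, fun x m ↦ ?_⟩
      rw [← sub_eq_zero, ← lie_sub]
      refine h x _ ?_
      rw [map_sub, ← Module.End.mul_apply, hid.eq, sub_self]
    · push Not at h
      obtain ⟨x, m, hm, hx⟩ := h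
      obtain ⟨E', hE', hid', hlt⟩ := hE.exists_ker_lt hid hm hx
      exact ih _ (hN ▸ hlt) E' rfl hE' hid'

/-- **Whitehead's first lemma**, with the primitive of the cocycle chosen in the span of the
`⁅x, n⁆`. -/
lemma exists_eq_lie_of_isCocycle {c : K →ₗ[k] M} (hc : IsCocycle c) :
    ∃ m ∈ Submodule.span k {z : M | ∃ (x : K) (n : M), ⁅x, n⁆ = z}, ∀ x : K, c x = ⁅x, m⁆ := by
  obtain ⟨E, hE, hlie⟩ := exists_isGood_lie_eq k K M
  obtain ⟨m, hm⟩ := hE.cocycle c hc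
  -- by perfectness it is enough to look at brackets, and `c ⁅x, y⁆` lies in the span of the `⁅x, n⁆`
  have hEc : E ∘ₗ c = c := by
    refine LinearMap.ext_on (span_lie_eq_top k K) ?_
    rintro _ ⟨x, y, rfl⟩
    simp [hc x y, hE.comm, hlie]
  exact ⟨E m, hE.mem_span m, fun x ↦ by rw [hlie, ← hm, ← LinearMap.comp_apply, hEc]⟩

/-- The invariants of `M` meet the span of the `⁅x, n⁆` trivially. -/
lemma eq_zero_of_mem_span_of_lie_eq_zero {m : M}
    (hm : m ∈ Submodule.span k {z : M | ∃ (x : K) (n : M), ⁅x, n⁆ = z})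
    (h0 : ∀ x : K, ⁅x, m⁆ = 0) : m = 0 := by
  obtain ⟨E, hE, hlie⟩ := exists_isGood_lie_eq k K M
  have hfix : Set.EqOn E (LinearMap.id : Module.End k M)
      (Submodule.span k {z : M | ∃ (x : K) (n : M), ⁅x, n⁆ = z} : Set M) := by
    refine LinearMap.eqOn_span ?_
    rintro _ ⟨x, n, rfl⟩
    simp [hE.comm, hlie]
  exact (hfix hm).symm.trans (hE.inv m h0)

end Whitehead

end SemidirectDerivation

/-! ### Derivations of a semidirect product -/

open SemidirectDerivation

/-- Every derivation `ζ` of a semidirect product `𝔤 = V ⋊ L` (with `V` an abelian ideal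
and `L` a semisimple complementary subalgebra) preserves `V`, and there are unique
`l₀ ∈ L` and `v₀ ∈ V_⊥ = span{[l,v]}`, together with a linear map `g` preserving `V`
and commuting with the `L`-action, such that `ζ(v) = [l₀,v] + g(v)` on `V` and
`ζ(l) = [l₀,l] + [l,v₀]` on `L`. -/
theorem derivation_structure_of_semidirect
    {L : Type*} [LieRing L] [LieAlgebra ℝ L] [FiniteDimensional ℝ L]
    (V : LieIdeal ℝ L)
    (habl : ∀ x ∈ V, ∀ y ∈ V, ⁅x, y⁆ = (0 : L))
    (K : LieSubalgebra ℝ L) [LieAlgebra.IsSemisimple ℝ K]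
    (hcompl : IsCompl V.toSubmodule K.toSubmodule)
    (ζ : LieDerivation ℝ L L) :
    (∀ v ∈ V, ζ v ∈ V)
      ∧ (∃! p : L × L, p.1 ∈ K
          ∧ p.2 ∈ Submodule.span ℝ {z : L | ∃ l ∈ K, ∃ v ∈ V, z = ⁅l, v⁆}
          ∧ ∃ g : L →ₗ[ℝ] L,
              (∀ v ∈ V, g v ∈ V)
              ∧ (∀ l ∈ K, ∀ v ∈ V, g ⁅l, v⁆ = ⁅l, g v⁆)
              ∧ (∀ v ∈ V, ζ v = ⁅p.1, v⁆ + g v)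
              ∧ (∀ l ∈ K, ζ l = ⁅p.1, l⁆ + ⁅l, p.2⁆)) := by
  -- the projection onto `K` along `V` is a Lie algebra homomorphism
  obtain ⟨q, hqK, hqV, hqsub⟩ : ∃ q : L →ₗ[ℝ] K, (∀ l : K, q l = l) ∧ (∀ v ∈ V, q v = 0) ∧
      ∀ x, x - q x ∈ V := by
    refine ⟨K.toSubmodule.projectionOnto V.toSubmodule hcompl.symm, fun l ↦ ?_, fun v hv ↦ ?_,
      fun x ↦ ?_⟩
    · exact Submodule.projectionOnto_apply_left hcompl.symm l
    · exact (Submodule.projectionOnto_apply_eq_zero_iff hcompl.symm).mpr hv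
    · refine (Submodule.projectionOnto_apply_eq_zero_iff hcompl.symm).mp ?_
      rw [map_sub, sub_eq_zero]
      exact (Submodule.projectionOnto_apply_left hcompl.symm _).symm
  have hqmem {x : L} (hx : q x = 0) : x ∈ V := by simpa [hx] using hqsub x
  have hVl {x y : L} (hx : x ∈ V) : ⁅x, y⁆ ∈ V := lie_mem_left ℝ L V x y hx
  have hVr {x y : L} (hy : y ∈ V) : ⁅x, y⁆ ∈ V := lie_mem_right ℝ L V x y hy
  have hqlie (x y : L) : q ⁅x, y⁆ = ⁅q x, q y⁆ := by
    have h : ⁅x, y⁆ = ⁅x - q x, y⁆ + ⁅(q x : L), y - q y⁆ + ((⁅q x, q y⁆ : K) : L) := by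
      rw [LieSubalgebra.coe_bracket, sub_lie, lie_sub]; abel
    rw [h, map_add, map_add, hqV _ (hVl (hqsub x)), hqV _ (hVr (hqsub y)), hqK]; simp
  -- `q (ζ V)` is an abelian ideal of `K`: apply `q ∘ ζ²` to `⁅v, w⁆ = 0`.
  have hζV : ∀ v ∈ V, ζ v ∈ V := by
    let I : LieIdeal ℝ K :=
      { V.toSubmodule.map (q ∘ₗ (ζ : L →ₗ[ℝ] L)) with
        lie_mem := by
          rintro x _ ⟨v, hv, rfl⟩
          refine ⟨⁅(x : L), v⁆, hVr hv, ?_⟩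
          change q (ζ ⁅(x : L), v⁆) = ⁅x, q (ζ v)⁆
          rw [LieDerivation.apply_lie_eq_add, map_add, hqlie, hqlie, hqV v hv, hqK, lie_zero,
            add_zero] }
    have hI : IsLieAbelian I := by
      refine ⟨?_⟩
      rintro ⟨_, v, hv, rfl⟩ ⟨_, w, hw, rfl⟩
      apply Subtype.ext
      change ⁅q (ζ v), q (ζ w)⁆ = 0
      have h := congrArg (fun z ↦ q (ζ (ζ z))) (habl v hv w hw)
      simp only [LieDerivation.apply_lie_eq_add, map_add, map_zero, hqlie, hqV v hv, hqV w hw,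
        lie_zero, zero_lie, zero_add, add_zero] at h
      rw [← two_smul ℝ] at h
      exact (smul_eq_zero.mp h).resolve_left two_ne_zero
    have hbot := LieAlgebra.IsKilling.ideal_eq_bot_of_isLieAbelian I
    intro v hv
    have hmem : q (ζ v) ∈ I := ⟨v, hv, rfl⟩
    rw [hbot, LieSubmodule.mem_bot] at hmem
    exact hqmem hmem
  have hspan (v : V) : v ∈ Submodule.span ℝ {z : V | ∃ (x : K) (n : V), ⁅x, n⁆ = z} ↔
      (v : L) ∈ Submodule.span ℝ {z : L | ∃ l ∈ K, ∃ v ∈ V, z = ⁅l, v⁆} := by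
    have himg : {z : L | ∃ l ∈ K, ∃ v ∈ V, z = ⁅l, v⁆} =
        V.toSubmodule.subtype '' {z : V | ∃ (x : K) (n : V), ⁅x, n⁆ = z} := by
      ext z
      constructor
      · rintro ⟨l, hl, v, hv, rfl⟩
        exact ⟨_, ⟨⟨l, hl⟩, ⟨v, hv⟩, rfl⟩, rfl⟩
      · rintro ⟨_, ⟨l, v, rfl⟩, rfl⟩
        exact ⟨l, l.2, v, v.2, rfl⟩
    rw [himg, ← Submodule.map_span]
    exact ⟨Submodule.mem_map_of_mem, fun ⟨w, hw, he⟩ ↦ Subtype.ext he ▸ hw⟩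
  have hspanV {z : L} (hz : z ∈ Submodule.span ℝ {z : L | ∃ l ∈ K, ∃ v ∈ V, z = ⁅l, v⁆}) :
      z ∈ V := by
    refine Submodule.span_le (p := V.toSubmodule).mpr ?_ hz
    rintro _ ⟨l, -, v, hv, rfl⟩
    exact hVr hv
  refine ⟨hζV, ?_⟩
  -- the `K`-component of `ζ` on `K` is a derivation of `K`, hence inner
  let D : LieDerivation ℝ K K :=
    { toLinearMap := q ∘ₗ (ζ : L →ₗ[ℝ] L) ∘ₗ K.toSubmodule.subtype
      leibniz' := fun a b ↦ by
        change q (ζ ⁅(a : L), (b : L)⁆) = ⁅a, q (ζ b)⁆ - ⁅b, q (ζ a)⁆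
        rw [LieDerivation.apply_lie_eq_sub, map_sub, hqlie, hqlie, hqK, hqK] }
  obtain ⟨l₀, hl₀⟩ := LieDerivation.IsKilling.exists_eq_ad D
  have hl₀' (l : K) : q (ζ l) = ⁅l₀, l⁆ := by
    have h := LieDerivation.congr_fun hl₀ l
    have had := LinearMap.congr_fun (LieDerivation.coe_ad_apply_eq_ad_apply (R := ℝ) l₀) l
    exact h.symm.trans had
  -- the `V`-component of `ζ` on `K` is a cocycle, hence a coboundary
  let c : K →ₗ[ℝ] V := LinearMap.codRestrict V.toSubmodule
    ((LinearMap.id - K.toSubmodule.subtype ∘ₗ q) ∘ₗ (ζ : L →ₗ[ℝ] L) ∘ₗ K.toSubmodule.subtype)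
    fun l ↦ hqsub _
  have hc (l : K) : (c l : L) = ζ l - q (ζ l) := rfl
  have hcoc : IsCocycle c := fun x y ↦ by
    apply Subtype.ext
    change (c ⁅x, y⁆ : L) = ⁅(x : L), (c y : L)⁆ - ⁅(y : L), (c x : L)⁆
    rw [hc, hc, hc, LieSubalgebra.coe_bracket, LieDerivation.apply_lie_eq_sub, map_sub, hqlie,
      hqlie, hqK, hqK, lie_sub, lie_sub, AddSubgroupClass.coe_sub, LieSubalgebra.coe_bracket,
      LieSubalgebra.coe_bracket]
    abel
  obtain ⟨v₀, hv₀, hcv⟩ := exists_eq_lie_of_isCocycle hcoc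
  have hζK (l : L) (hl : l ∈ K) : ζ l = ⁅(l₀ : L), l⁆ + ⁅l, (v₀ : L)⁆ := by
    have h1 := congrArg (Subtype.val) (hcv ⟨l, hl⟩)
    have h2 := congrArg (Subtype.val) (hl₀' ⟨l, hl⟩)
    change ζ l - q (ζ l) = ⁅l, (v₀ : L)⁆ at h1
    change (q (ζ l) : L) = ⁅(l₀ : L), l⁆ at h2
    rw [← h1, ← h2]; abel
  refine ⟨((l₀ : L), (v₀ : L)), ⟨l₀.2, (hspan v₀).mp hv₀,
    (ζ : L →ₗ[ℝ] L) - (LieAlgebra.ad ℝ L (l₀ : L)), fun v hv ↦ sub_mem (hζV v hv) (hVr hv), ?_,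
    fun v _ ↦ ?_, hζK⟩, ?_⟩
  · intro l hl v hv
    change ζ ⁅l, v⁆ - ⁅(l₀ : L), ⁅l, v⁆⁆ = ⁅l, ζ v - ⁅(l₀ : L), v⁆⁆
    rw [LieDerivation.apply_lie_eq_add, hζK l hl, add_lie, habl _ (hVr v₀.2) v hv, lie_sub,
      leibniz_lie (l₀ : L)]
    abel
  · change ζ v = ⁅(l₀ : L), v⁆ + (ζ v - ⁅(l₀ : L), v⁆)
    abel
  · rintro ⟨a, b⟩ ⟨ha, hb, g, -, -, -, hab⟩
    dsimp only at ha hb hab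
    have hbV := hspanV hb
    -- comparing `K`-components, `a - l₀` centralises `K`
    have hal : (⟨a, ha⟩ : K) = l₀ := by
      rw [← sub_eq_zero]
      have hcen : (⟨a, ha⟩ - l₀ : K) ∈ LieAlgebra.center ℝ K := by
        intro l
        have h := congrArg q ((hab l l.2).symm.trans (hζK l l.2))
        rw [map_add, map_add, hqV _ (hVr hbV), hqV _ (hVr v₀.2), add_zero, add_zero, hqlie, hqlie,
          hqK, hqK, show q a = ⟨a, ha⟩ from hqK ⟨a, ha⟩] at h
        rw [← lie_skew, sub_lie, h, sub_self, neg_zero]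
      simpa using hcen
    have hal' : a = l₀ := congrArg Subtype.val hal
    -- comparing `V`-components, `b - v₀` is a `K`-invariant vector of `span {⁅l, v⁆}`
    have hbv : (⟨b, hbV⟩ - v₀ : V) = 0 := by
      refine eq_zero_of_mem_span_of_lie_eq_zero (k := ℝ) (K := K)
        (sub_mem ((hspan ⟨b, hbV⟩).mpr hb) hv₀) fun l ↦ Subtype.ext ?_
      have h := (hab l l.2).symm.trans (hζK l l.2)
      rw [hal', add_right_inj] at h
      change ⁅(l : L), b - (v₀ : L)⁆ = 0
      rw [lie_sub, h, sub_self]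
    exact Prod.ext hal' (congrArg Subtype.val (sub_eq_zero.mp hbv))
end

section
/- Let (𝕍, g) be a finite-dimensional real inner product space, J : 𝕍 → 𝕍 with J² = −id and g(Jv, Jw) = g(v,w), and let η : 𝕍 → so(𝕍,g) be a linear map into g-skew-adjoint endomorphisms with η_{Jv} = η_v ∘ J = −J ∘ η_v for all v ∈ 𝕍. Define τ(v,w) := η_v w − η_w v. Let R : 𝕍⁴ → ℝ be multilinear with R(v₁,v₂,v₃,v₄) = −R(v₂,v₁,v₃,v₄) and R(v₁,v₂,v₃,v₄) = R(v₃,v₄,v₁,v₂), and suppose that the operator R^D(v₁,v₂) defined by g(R^D(v₁,v₂)v₃, v₄) := R(v₁,v₂,v₃,v₄) + g([η_{v₁}, η_{v₂}] v₃, v₄) − g(η_{τ(v₁,v₂)} v₃, v₄) commutes with J for all v₁, v₂. Then: (i) R(Jv₁,Jv₂,Jv₃,Jv₄) = R(v₁,v₂,v₃,v₄); (ii) g(η_{τ(v₁,v₂)} v₃, v₄) = g(η_{τ(v₃,v₄)} v₁, v₂) for all vᵢ; (iii) R(Jv₁,v₂,v₃,v₄) + R(v₁,Jv₂,v₃,v₄)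 + R(v₁,v₂,Jv₃,v₄) + R(v₁,v₂,v₃,Jv₄) = 0. -/
/-!
Write `B(a,b,c,d) = g(η_{τ(a,b)} c, d)`. Each `η_v` anticommutes with `J`, so `[η_a, η_b]`
commutes with `J`; since `R^D(a,b)` does too, comparing `R^D(a,b)` at `(Jc, Jd)` and `(c, d)`
gives the key identity `R(a,b,Jc,Jd) = R(a,b,c,d) - 2 B(a,b,c,d)`. By pair symmetry of `R` the
same holds for the first pair, with `B(c,d,a,b)`. As `τ(Ja,Jb) = -τ(a,b)`, evaluating
`R(Ja,Jb,Jc,Jd)` by applying the two identities in either order yields `R ± 2(B(a,b,c,d) -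
B(c,d,a,b))`; equating the two signs proves that `B` is symmetric in pairs and that `R` is
`J`-invariant. Replacing `d` by `Jd` in the key identity (and likewise in the first pair) writes
the sum in the last claim as `2 B(a,b,c,Jd) + 2 B(a,Jb,c,d)`, which vanishes because
`τ(a,Jb) = -J τ(a,b)`.
-/


/-- Algebraic content of Gray's condition (G₂) for quasi-Kähler structures with parallel
torsion: if the operator `R^D(v₁,v₂) = R(v₁,v₂) + [η_{v₁},η_{v₂}] - η_{τ(v₁,v₂)}`
commutes with `J`, then the curvature `R` is invariant under `J` in all four arguments,
the tensor `g(η_{τ(·,·)}·,·)` is symmetric in pairs, and `[J,R] = 0`. -/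
theorem gray_G2_of_parallel_torsion
    {V : Type*} [AddCommGroup V] [Module ℝ V] [FiniteDimensional ℝ V]
    (g : V →ₗ[ℝ] V →ₗ[ℝ] ℝ)
    (hgsymm : ∀ v w, g v w = g w v)
    (hgpos : ∀ v, v ≠ 0 → 0 < g v v)
    (J : V →ₗ[ℝ] V) (hJ2 : ∀ v, J (J v) = -v)
    (hJg : ∀ v w, g (J v) (J w) = g v w)
    (η : V →ₗ[ℝ] V →ₗ[ℝ] V)
    (hηskew : ∀ v w u, g (η v w) u = - g w (η v u))
    (hηJ1 : ∀ v w, η (J v) w = η v (J w))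
    (hηJ2 : ∀ v w, η (J v) w = - J (η v w))
    (R : V →ₗ[ℝ] V →ₗ[ℝ] V →ₗ[ℝ] V →ₗ[ℝ] ℝ)
    (hR1 : ∀ v₁ v₂ v₃ v₄, R v₁ v₂ v₃ v₄ = - R v₂ v₁ v₃ v₄)
    (hR2 : ∀ v₁ v₂ v₃ v₄, R v₁ v₂ v₃ v₄ = R v₃ v₄ v₁ v₂)
    (RD : V → V → V → V)
    (hRD : ∀ v₁ v₂ v₃ v₄, g (RD v₁ v₂ v₃) v₄
        = R v₁ v₂ v₃ v₄ + g (η v₁ (η v₂ v₃) - η v₂ (η v₁ v₃)) v₄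
          - g (η (η v₁ v₂ - η v₂ v₁) v₃) v₄)
    (hcomm : ∀ v₁ v₂ v₃, RD v₁ v₂ (J v₃) = J (RD v₁ v₂ v₃)) :
    (∀ v₁ v₂ v₃ v₄, R (J v₁) (J v₂) (J v₃) (J v₄) = R v₁ v₂ v₃ v₄)
      ∧ (∀ v₁ v₂ v₃ v₄, g (η (η v₁ v₂ - η v₂ v₁) v₃) v₄
          = g (η (η v₃ v₄ - η v₄ v₃) v₁) v₂)
      ∧ (∀ v₁ v₂ v₃ v₄, R (J v₁) v₂ v₃ v₄ + R v₁ (J v₂) v₃ v₄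
          + R v₁ v₂ (J v₃) v₄ + R v₁ v₂ v₃ (J v₄) = 0) := by
  have gJ : ∀ v w, g (J v) w = - g v (J w) := fun v w => by
    have h := hJg v (J w)
    rw [hJ2, map_neg] at h
    linarith
  have anti : ∀ v w, η v (J w) = - J (η v w) := fun v w => by rw [← hηJ1, hηJ2]
  have key : ∀ a b c d, R a b (J c) (J d)
      = R a b c d - 2 * g (η (η a b - η b a) c) d := fun a b c d => by
    have h1 := hRD a b (J c) (J d)
    rw [hcomm, hJg, hRD] at h1
    simp only [anti, map_neg, neg_neg, ← map_sub, LinearMap.neg_apply, hJg] at h1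
    linarith
  have key' : ∀ a b c d, R (J a) (J b) c d
      = R a b c d - 2 * g (η (η c d - η d c) a) b := fun a b c d => by
    rw [hR2, key, hR2]
  have tauJ : ∀ a b, η a (J b) - η (J b) a = - J (η a b - η b a) := fun a b => by
    rw [anti, hηJ2, map_sub]
    abel
  have tauJJ : ∀ a b, η (J a) (J b) - η (J b) (J a) = - (η a b - η b a) := fun a b => by
    simp only [hηJ1, hJ2, map_neg]
    abel
  have BJJ : ∀ a b c d, g (η (η (J a) (J b) - η (J b) (J a)) c) d
      = - g (η (η a b - η b a) c) d := fun a b c d => by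
    rw [tauJJ, map_neg, LinearMap.neg_apply, map_neg, LinearMap.neg_apply]
  have pair : ∀ a b c d, g (η (η a b - η b a) c) d = g (η (η c d - η d c) a) b :=
      fun a b c d => by
    have h1 := key (J a) (J b) c d
    have h2 := key' a b (J c) (J d)
    rw [BJJ] at h1 h2
    have h3 := key a b c d
    have h4 := key' a b c d
    linarith
  refine ⟨fun a b c d => ?_, pair, fun a b c d => ?_⟩
  · rw [key, BJJ, key', pair a b c d]
    ring
  · have h1 := key a b c (J d)
    have h2 := key' a (J b) c d
    rw [← pair a (J b) c d, tauJ, map_neg, LinearMap.neg_apply, hηJ2, neg_neg, gJ] at h2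
    simp only [hJ2, map_neg, LinearMap.neg_apply] at h1 h2
    linarith
end

section
/- Let W be a finite-dimensional real Lie algebra carrying a complex structure J (a linear map with J² = −id) such that [Jv, Jw] = −[v,w] and [v, Jw] = −J[v,w] for all v, w ∈ W. Then a linear map f : W → W satisfying f ∘ J = −J ∘ f is a derivation of W if and only if f([W,W]) = 0 and [f(w), w'] = 0 for all w, w' ∈ W (i.e., the image of f lies in the center of W). -/
/-!
Computing `f ⁅v, J w⁆` in two ways, for a derivation `f` anticommuting with `J`, shows that
`J ⁅f v, w⁆` equals its own negative. As `J` is injective, `f v` is central, and then the Leibniz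
rule makes `f` vanish on brackets. Conversely, both sides of the Leibniz rule are zero.
-/


/-- For a Lie algebra `W` with a complex structure `J` satisfying `[Jv,Jw] = -[v,w]` and
`[v,Jw] = -J[v,w]`, a linear map `f` anticommuting with `J` is a derivation of `W`
iff `f` kills all brackets and the image of `f` lies in the center of `W`. -/
theorem antiinvariant_derivation_characterization
    {W : Type*} [LieRing W] [LieAlgebra ℝ W] [FiniteDimensional ℝ W]
    (J : W →ₗ[ℝ] W) (hJ2 : ∀ v, J (J v) = -v)
    (hJbr : ∀ v w : W, ⁅J v, J w⁆ = -⁅v, w⁆)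
    (hJbr2 : ∀ v w : W, ⁅v, J w⁆ = - J ⁅v, w⁆)
    (f : W →ₗ[ℝ] W) (hfJ : ∀ v, f (J v) = - J (f v)) :
    (∀ v w : W, f ⁅v, w⁆ = ⁅f v, w⁆ + ⁅v, f w⁆)
      ↔ ((∀ v w : W, f ⁅v, w⁆ = 0) ∧ (∀ w w' : W, ⁅f w, w'⁆ = 0)) := by
  refine ⟨fun hd => ?_, fun ⟨h0, hc⟩ v w => ?_⟩
  · have hc : ∀ v w : W, ⁅f v, w⁆ = 0 := by
      intro v w
      -- Expanding `f ⁅v, J w⁆` directly gives `-J ⁅f v, w⁆ + J ⁅v, f w⁆`, whereas pulling `J` out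
      -- of the bracket and past `f` first gives `J ⁅f v, w⁆ + J ⁅v, f w⁆`.
      have h := hd v (J w)
      rw [hJbr2 v w, map_neg, hfJ, neg_neg, hd v w, map_add, hJbr2, hfJ, lie_neg, hJbr2,
        neg_neg, add_left_inj] at h
      have hJ0 : J ⁅f v, w⁆ = 0 := by
        have h2 : (2 : ℝ) • J ⁅f v, w⁆ = 0 := by
          rw [two_smul, ← eq_neg_iff_add_eq_zero, ← h]
        exact (smul_eq_zero.mp h2).resolve_left two_ne_zero
      rw [← neg_eq_zero, ← hJ2, hJ0, map_zero]
    refine ⟨fun v w => ?_, hc⟩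
    rw [hd, hc, ← lie_skew, hc, neg_zero, add_zero]
  · rw [h0, hc, ← lie_skew, hc, neg_zero, add_zero]
end
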